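/- arXiv:2005.12063 — 2 statements merged into one kernel-verified Lean document; each statement's English description precedes it below -/
import Mathlib

section
/- Let S ⊆ ℂᵐ be a compact polynomially convex set disjoint from a compact set T such that S ∪ T is polynomially convex. If S' ⊆ S is compact polynomially convex, then S' ∪ T is polynomially convex. -/
noncomputable section
open Set Metric MvPolynomial

/-- The polynomially convex hull of a set in `ℂⁿ`. -/
def polyHull {n : ℕ} (K : Set (EuclideanSpace ℂ (Fin n))) : Set (EuclideanSpace ℂ (Fin n)) :=
  {z | ∀ p : MvPolynomial (Fin n) ℂ,
    ‖eval (fun i => z i) p‖ ≤ sSup ((fun w => ‖eval (fun i => w i) p‖) '' K)}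

/-- A compact set in `ℂⁿ` is polynomially convex if it equals its polynomial hull. -/
def IsPolyConvex {n : ℕ} (K : Set (EuclideanSpace ℂ (Fin n))) : Prop :=
  polyHull K = K

/-- Polynomial hull for subsets of a product `ℂᴺ × ℂⁿ ≅ ℂ^{N+n}`, using polynomials in the
`N + n` coordinates. -/
def polyHull2 {N n : ℕ} (S : Set (EuclideanSpace ℂ (Fin N) × EuclideanSpace ℂ (Fin n))) :
    Set (EuclideanSpace ℂ (Fin N) × EuclideanSpace ℂ (Fin n)) :=
  {z | ∀ p : MvPolynomial (Fin N ⊕ Fin n) ℂ,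
    ‖eval (Sum.elim (fun i => z.1 i) (fun j => z.2 j)) p‖ ≤
      sSup ((fun w => ‖eval (Sum.elim (fun i => w.1 i) (fun j => w.2 j)) p‖) '' S)}

def IsPolyConvex2 {N n : ℕ} (S : Set (EuclideanSpace ℂ (Fin N) × EuclideanSpace ℂ (Fin n))) :
    Prop :=
  polyHull2 S = S

/-!
A polynomial `p` close to `1` on `S` and close to `0` on `T` reduces the claim to an estimate: for
`z ∈ S` in the hull of `S' ∪ T` and any polynomial `q`, the values of `q * p` show that `|q(z)|`
exceeds `sup |q|` over `S'` by at most an arbitrarily small amount, so `z` lies in the hull of `S'`.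

Such a `p` approximates an element of the algebra `P(S ∪ T)` that is a nonzero constant at the
points of `S` and vanishes at those of `T`. The joint spectrum of the coordinate functions in
`P(S ∪ T)` is the polynomial hull `S ∪ T`, so on a neighbourhood `Ω` of `S` away from `T` there are
smooth `sᵢ` with values in the algebra and `∑ (zᵢ - aᵢ) sᵢ = 1 - ψ`, where `ψ` has compact support
in `Ω`. The element is `∫ ψ det (∂̄ⱼ sᵢ)`, the higher-dimensional counterpart of the Cauchy integral
of the constant `1` along a contour around `S`. The integral does not depend on the solution
`(s, ψ)`, hence at a point of `S` it can be computed with an explicit Cauchy-type kernel, and at a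
point of `T` with a solution for which `ψ = 0`.
-/

open Filter MeasureTheory
open scoped ContDiff Topology

section Dbar

variable {E F G : Type*} [NormedAddCommGroup E] [NormedSpace ℂ E]
  [NormedAddCommGroup F] [NormedSpace ℂ F] [NormedAddCommGroup G] [NormedSpace ℂ G]
  {f g : E → F} {v w z : E}

/-- The Cauchy–Riemann operator in the direction `v`: twice the conjugate-linear part of the real
differential of `f` at `z`, evaluated at `v`. For the `j`-th basis vector of `ℂⁿ` this is
`2 ∂f/∂z̄ⱼ`. -/
def dbar (v : E) (f : E → F) (z : E) : F :=
  fderiv ℝ f z v + Complex.I • fderiv ℝ f z (Complex.I • v)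

theorem dbar_congr (h : f =ᶠ[𝓝 z] g) : dbar v f z = dbar v g z := by
  simp only [dbar, h.fderiv_eq]

@[simp] theorem dbar_zero_direction : dbar (0 : E) f z = 0 := by
  simp [dbar]

theorem dbar_eq_zero_of_differentiableAt (hf : DifferentiableAt ℂ f z) : dbar v f z = 0 := by
  simp [dbar, hf.fderiv_restrictScalars ℝ, smul_smul]

theorem dbar_add (hf : DifferentiableAt ℝ f z) (hg : DifferentiableAt ℝ g z) :
    dbar v (fun y => f y + g y) z = dbar v f z + dbar v g z := by
  simp only [dbar, fderiv_fun_add hf hg, add_apply, smul_add]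
  abel

theorem dbar_const_smul (c : ℝ) (hf : DifferentiableAt ℝ f z) :
    dbar v (fun y => c • f y) z = c • dbar v f z := by
  simp only [dbar, fderiv_fun_const_smul hf, smul_apply, smul_add, smul_comm c]

theorem dbar_const_sub (c : F) : dbar v (fun y => c - f y) z = -dbar v f z := by
  simp only [dbar, fderiv_const_sub, neg_apply, smul_neg]
  abel

theorem dbar_sum {ι : Type*} {u : Finset ι} {f : ι → E → F}
    (hf : ∀ k ∈ u, DifferentiableAt ℝ (f k) z) :
    dbar v (fun y => ∑ k ∈ u, f k y) z = ∑ k ∈ u, dbar v (f k) z := by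
  simp only [dbar, fderiv_fun_sum hf, sum_apply, Finset.smul_sum, Finset.sum_add_distrib]

theorem dbar_clm_comp (L : F →L[ℂ] G) (hf : DifferentiableAt ℝ f z) :
    dbar v (fun y => L (f y)) z = L (dbar v f z) := by
  have hL : fderiv ℝ (fun y => L (f y)) z = (L.restrictScalars ℝ).comp (fderiv ℝ f z) :=
    ((L.restrictScalars ℝ).hasFDerivAt.comp z hf.hasFDerivAt).fderiv
  simp [dbar, hL]

theorem dbar_comp_clm_sub (L : E →L[ℂ] G) (c : G) {f : G → F}
    (hf : DifferentiableAt ℝ f (L z - c)) :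
    dbar v (fun y => f (L y - c)) z = dbar (L v) f (L z - c) := by
  have hL : fderiv ℝ (fun y => f (L y - c)) z
      = (fderiv ℝ f (L z - c)).comp (L.restrictScalars ℝ) :=
    (hf.hasFDerivAt.comp z ((L.restrictScalars ℝ).hasFDerivAt.sub_const c)).fderiv
  simp [dbar, hL]

theorem contDiff_dbar (v : E) (hf : ContDiff ℝ ∞ f) : ContDiff ℝ ∞ (dbar v f) := by
  have hf' : ContDiff ℝ ∞ (fderiv ℝ f) := hf.fderiv_right (by simp)
  exact (hf'.clm_apply contDiff_const).add (contDiff_const.smul (hf'.clm_apply contDiff_const))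

theorem support_dbar_subset : Function.support (dbar v f) ⊆ tsupport f := fun z hz => by
  contrapose! hz
  simp [dbar, fderiv_of_notMem_tsupport ℝ hz]

theorem dbar_comm (v w : E) (hf : ContDiff ℝ ∞ f) (z : E) :
    dbar v (dbar w f) z = dbar w (dbar v f) z := by
  have hd : DifferentiableAt ℝ (fderiv ℝ f) z :=
    (hf.fderiv_right (m := ∞) (by simp)).differentiable (by simp) z
  have hsymm : IsSymmSndFDerivAt ℝ f z :=
    hf.contDiffAt.isSymmSndFDerivAt (by
      rw [minSmoothness_of_isRCLikeNormedField]
      exact WithTop.coe_le_coe.mpr le_top)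
  have hdir (u : E) : HasFDerivAt (fun y => fderiv ℝ f y u) ((fderiv ℝ (fderiv ℝ f) z).flip u) z :=
    by simpa using! hd.hasFDerivAt.clm_apply (hasFDerivAt_const u z)
  have hsnd (w u : E) : fderiv ℝ (dbar w f) z u = fderiv ℝ (fderiv ℝ f) z u w
      + Complex.I • fderiv ℝ (fderiv ℝ f) z u (Complex.I • w) := by
    have hw : HasFDerivAt (dbar w f) _ z :=
      (hdir w).add ((hdir (Complex.I • w)).const_smul Complex.I)
    simp [hw.fderiv]
  simp only [dbar.eq_1 _ (dbar _ f), hsnd, hsymm.eq w, hsymm.eq (Complex.I • w), smul_add]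
  abel

section Integral

variable [FiniteDimensional ℂ E] [MeasurableSpace E] [BorelSpace E]

theorem integral_dbar_eq_zero (μ : Measure E) [μ.IsAddHaarMeasure] (v : E) (hf : ContDiff ℝ ∞ f)
    (hc : HasCompactSupport f) : ∫ z, dbar v f z ∂μ = 0 := by
  have : FiniteDimensional ℝ E := FiniteDimensional.complexToReal E
  have hint (u : E) : Integrable (fun z => fderiv ℝ f z u) μ :=
    ((hf.continuous_fderiv (by simp)).clm_apply continuous_const).integrable_of_hasCompactSupport
      (hc.fderiv_apply ℝ u)
  have hzero (u : E) : ∫ z, fderiv ℝ f z u ∂μ = 0 := by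
    have hparts := integral_smul_fderiv_eq_neg_fderiv_smul_of_integrable (μ := μ) (𝕜 := ℝ)
      (f := fun _ : E => (1 : ℝ)) (g := f) (v := u) (by simp) (by simpa using hint u)
      (by simpa using hf.continuous.integrable_of_hasCompactSupport hc) (by fun_prop)
      (fun z _ => hf.differentiable (by simp) z)
    simpa using hparts
  simp only [dbar]
  rw [integral_add (hint _) ((hint _).fun_smul _), integral_smul, hzero, hzero, smul_zero, add_zero]

end Integral

section Algebra

variable {R : Type*} [NormedCommRing R] [NormedAlgebra ℂ R] {f g : E → R}

theorem dbar_mul (hf : DifferentiableAt ℝ f z) (hg : DifferentiableAt ℝ g z) :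
    dbar v (fun y => f y * g y) z = f z * dbar v g z + dbar v f z * g z := by
  simp only [dbar, fderiv_fun_mul hf hg, add_apply, smul_apply, smul_eq_mul, mul_add, add_mul,
    mul_smul_comm, smul_mul_assoc, smul_add]
  simp only [mul_comm (g z)]
  abel

theorem dbar_prod {ι : Type*} [DecidableEq ι] {u : Finset ι} {f : ι → E → R}
    (hf : ∀ k ∈ u, DifferentiableAt ℝ (f k) z) :
    dbar v (fun y => ∏ k ∈ u, f k y) z
      = ∑ l ∈ u, (∏ k ∈ u.erase l, f k z) * dbar v (f l) z := by
  have hprod := (HasFDerivAt.finsetProd fun k hk => (hf k hk).hasFDerivAt).fderiv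
  simp only [dbar, hprod, sum_apply, smul_apply, smul_eq_mul, Finset.smul_sum, mul_add,
    mul_smul_comm, Finset.sum_add_distrib]

end Algebra

end Dbar

theorem hasDerivAt_det {ι R : Type*} [Fintype ι] [DecidableEq ι] [NormedCommRing R]
    [NormedAlgebra ℝ R] {M : ℝ → Matrix ι ι R} {M' : Matrix ι ι R} {t : ℝ}
    (hM : ∀ j k, HasDerivAt (fun t => M t j k) (M' j k) t) :
    HasDerivAt (fun t => (M t).det) (∑ i, ((M t).updateCol i fun j => M' j i).det) t := by
  have hsum := HasDerivAt.fun_sum (u := Finset.univ) fun (σ : Equiv.Perm ι) _ =>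
    (HasDerivAt.fun_finsetProd (u := Finset.univ) fun i _ => hM (σ i) i).const_smul
      (Equiv.Perm.sign σ)
  simp only [Matrix.det_apply] at hsum ⊢
  refine hsum.congr_deriv ?_
  rw [Finset.sum_comm]
  refine Finset.sum_congr rfl fun σ _ => ?_
  rw [Finset.smul_sum]
  refine Finset.sum_congr rfl fun i _ => ?_
  rw [← Finset.prod_erase_mul _ _ (Finset.mem_univ i), Matrix.updateCol_self, smul_eq_mul]
  congr 2
  refine Finset.prod_congr rfl fun k hk => ?_
  rw [Matrix.updateCol_ne (Finset.ne_of_mem_erase hk)]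

section DbarMatrix

variable {ι : Type*} [Fintype ι] [DecidableEq ι]
  {R : Type*} [NormedCommRing R] [NormedAlgebra ℂ R]

/-- The matrix with entries `2 ∂sₖ/∂z̄ⱼ`, with row index `j` and column index `k`. Its determinant
represents the form `∂̄s₁ ∧ ⋯ ∧ ∂̄sₙ` on `ℂⁿ` up to a constant. -/
def dbarMatrix (s : ι → (ι → ℂ) → R) (z : ι → ℂ) : Matrix ι ι R :=
  Matrix.of fun j k => dbar (Pi.single j 1) (s k) z

theorem dbarMatrix_update (s : ι → (ι → ℂ) → R) (i : ι) (g : (ι → ℂ) → R) (z : ι → ℂ) :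
    dbarMatrix (Function.update s i g) z
      = (dbarMatrix s z).updateCol i fun j => dbar (Pi.single j 1) g z := by
  ext j k
  rcases eq_or_ne k i with rfl | hk
  · simp [dbarMatrix]
  · simp [dbarMatrix, hk]

theorem dbarMatrix_add_smul {s r : ι → (ι → ℂ) → R} (hs : ∀ i, ContDiff ℝ ∞ (s i))
    (hr : ∀ i, ContDiff ℝ ∞ (r i)) (t : ℝ) (z : ι → ℂ) :
    dbarMatrix (s + t • r) z = dbarMatrix s z + t • dbarMatrix r z := by
  ext j k
  have hs' := (hs k).differentiable (by simp) z
  have hr' := (hr k).differentiable (by simp) z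
  exact (dbar_add hs' (hr'.fun_const_smul t)).trans (congrArg _ (dbar_const_smul t hr'))

theorem dbarMatrix_clm_comp {S : Type*} [NormedCommRing S] [NormedAlgebra ℂ S] (L : R →L[ℂ] S)
    {s : ι → (ι → ℂ) → R} (hs : ∀ i, ContDiff ℝ ∞ (s i)) (z : ι → ℂ) :
    dbarMatrix (fun i y => L (s i y)) z = (dbarMatrix s z).map L := by
  ext j k
  exact dbar_clm_comp L ((hs k).differentiable (by simp) z)

theorem continuous_dbarMatrix {s : ι → (ι → ℂ) → R} (hs : ∀ i, ContDiff ℝ ∞ (s i)) :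
    Continuous (dbarMatrix s) :=
  continuous_matrix fun j k => (contDiff_dbar (Pi.single j 1) (hs k)).continuous

theorem continuous_dbarMatrix_add_smul {s r : ι → (ι → ℂ) → R} (hs : ∀ i, ContDiff ℝ ∞ (s i))
    (hr : ∀ i, ContDiff ℝ ∞ (r i)) :
    Continuous fun p : ℝ × (ι → ℂ) => dbarMatrix (s + p.1 • r) p.2 := by
  have := continuous_dbarMatrix hs
  have := continuous_dbarMatrix hr
  simp only [dbarMatrix_add_smul hs hr]
  fun_prop

theorem hasDerivAt_det_dbarMatrix_add_smul {s r : ι → (ι → ℂ) → R}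
    (hs : ∀ i, ContDiff ℝ ∞ (s i)) (hr : ∀ i, ContDiff ℝ ∞ (r i)) (t : ℝ) (z : ι → ℂ) :
    HasDerivAt (fun t : ℝ => (dbarMatrix (s + t • r) z).det)
      (∑ i, ((dbarMatrix (s + t • r) z).updateCol i fun j => dbar (Pi.single j 1) (r i) z).det)
      t := by
  refine hasDerivAt_det (M' := dbarMatrix r z) fun j k => ?_
  simp only [dbarMatrix_add_smul hs hr]
  simpa using! ((hasDerivAt_id t).smul_const (dbarMatrix r z j k)).const_add (dbarMatrix s z j k)

theorem det_dbarMatrix_eq_zero_of_notMem_tsupport {s : ι → (ι → ℂ) → R} {i : ι} {z : ι → ℂ}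
    (hz : z ∉ tsupport (s i)) : (dbarMatrix s z).det = 0 :=
  Matrix.det_eq_zero_of_column_eq_zero i fun _ =>
    Function.notMem_support.mp fun h => hz (support_dbar_subset h)

/-- The Piola identity: the cofactors of a `∂̄`-Jacobian matrix are divergence free. -/
theorem sum_sign_smul_dbar_prod_erase {s : ι → (ι → ℂ) → R} (hs : ∀ k, ContDiff ℝ ∞ (s k))
    (i : ι) (z : ι → ℂ) :
    ∑ σ : Equiv.Perm ι, Equiv.Perm.sign σ • dbar (Pi.single (σ i) 1)
      (fun y => ∏ k ∈ Finset.univ.erase i, dbarMatrix s y (σ k) k) z = 0 := by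
  have hd (j k : ι) : DifferentiableAt ℝ (fun y => dbarMatrix s y j k) z :=
    (contDiff_dbar (Pi.single j 1) (hs k)).differentiable (by simp) z
  simp only [dbar_prod fun k _ => hd _ k, Finset.smul_sum]
  rw [Finset.sum_comm]
  refine Finset.sum_eq_zero fun l hl => ?_
  have hli : l ≠ i := Finset.ne_of_mem_erase hl
  -- Second derivatives commute, so `σ` and `σ * swap i l` contribute opposite terms.
  refine Finset.sum_involution (fun σ _ => σ * Equiv.swap i l) (fun σ _ => ?_)
    (fun σ _ _ h => hli.symm (Equiv.swap_eq_one_iff.mp (mul_eq_left.mp h)))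
    (fun _ _ => Finset.mem_univ _) (fun σ _ => by simp [mul_assoc])
  have hprod : ∏ k ∈ (Finset.univ.erase i).erase l, dbarMatrix s z ((σ * Equiv.swap i l) k) k
      = ∏ k ∈ (Finset.univ.erase i).erase l, dbarMatrix s z (σ k) k :=
    Finset.prod_congr rfl fun k hk => by
      obtain ⟨hkl, hki, -⟩ : k ≠ l ∧ k ≠ i ∧ k ∈ Finset.univ := by simpa using hk
      rw [Equiv.Perm.mul_apply, Equiv.swap_apply_of_ne_of_ne hki hkl]
  have hcomm : dbar (Pi.single (σ l) 1) (fun y => dbarMatrix s y (σ i) l) z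
      = dbar (Pi.single (σ i) 1) (fun y => dbarMatrix s y (σ l) l) z :=
    dbar_comm _ _ (hs l) z
  rw [hprod, Equiv.Perm.mul_apply, Equiv.Perm.mul_apply, Equiv.swap_apply_left,
    Equiv.swap_apply_right, hcomm, Equiv.Perm.sign_mul, Equiv.Perm.sign_swap hli.symm]
  simp

theorem det_dbarMatrix_eq_sum_dbar {s : ι → (ι → ℂ) → R} (hs : ∀ k, ContDiff ℝ ∞ (s k)) (i : ι)
    (z : ι → ℂ) :
    (dbarMatrix s z).det = ∑ σ : Equiv.Perm ι, Equiv.Perm.sign σ • dbar (Pi.single (σ i) 1)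
      (fun y => s i y * ∏ k ∈ Finset.univ.erase i, dbarMatrix s y (σ k) k) z := by
  have hcofactor (σ : Equiv.Perm ι) : DifferentiableAt ℝ
      (fun y => ∏ k ∈ Finset.univ.erase i, dbarMatrix s y (σ k) k) z :=
    (contDiff_prod fun k _ => contDiff_dbar _ (hs k)).differentiable (by simp : ∞ ≠ 0) z
  simp only [dbar_mul ((hs i).differentiable (by simp) z) (hcofactor _), smul_add,
    Finset.sum_add_distrib, ← mul_smul_comm, ← Finset.mul_sum]
  rw [sum_sign_smul_dbar_prod_erase hs, mul_zero, zero_add, Matrix.det_apply]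
  refine Finset.sum_congr rfl fun σ _ => ?_
  rw [← Finset.mul_prod_erase _ _ (Finset.mem_univ i), mul_smul_comm]
  rfl

theorem integrable_det_dbarMatrix {s : ι → (ι → ℂ) → R} (hs : ∀ k, ContDiff ℝ ∞ (s k))
    {i : ι} (hc : HasCompactSupport (s i)) : Integrable fun z => (dbarMatrix s z).det :=
  (continuous_dbarMatrix hs).matrix_det.integrable_of_hasCompactSupport <|
    HasCompactSupport.intro' hc.isCompact (isClosed_tsupport _) fun _ hz =>
      det_dbarMatrix_eq_zero_of_notMem_tsupport hz

theorem integral_det_dbarMatrix_eq_zero {s : ι → (ι → ℂ) → R} (hs : ∀ k, ContDiff ℝ ∞ (s k))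
    {i : ι} (hc : HasCompactSupport (s i)) : ∫ z, (dbarMatrix s z).det = 0 := by
  have hsmooth (σ : Equiv.Perm ι) : ContDiff ℝ ∞
      fun y => s i y * ∏ k ∈ Finset.univ.erase i, dbarMatrix s y (σ k) k :=
    (hs i).mul (contDiff_prod fun k _ => contDiff_dbar _ (hs k))
  simp only [det_dbarMatrix_eq_sum_dbar hs i]
  have hint (σ : Equiv.Perm ι) : Integrable fun z => dbar (Pi.single (σ i) 1)
      (fun y => s i y * ∏ k ∈ Finset.univ.erase i, dbarMatrix s y (σ k) k) z :=
    (contDiff_dbar _ (hsmooth σ)).continuous.integrable_of_hasCompactSupport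
      (hc.mul_right.mono' support_dbar_subset)
  have hzero (σ : Equiv.Perm ι) := integral_dbar_eq_zero volume (Pi.single (σ i) 1) (hsmooth σ)
    hc.mul_right
  rw [integral_finsetSum _ fun σ _ => ?_]
  · refine Finset.sum_eq_zero fun σ _ => ?_
    rcases Int.units_eq_one_or (Equiv.Perm.sign σ) with hσ | hσ <;>
      simp [hσ, integral_neg, hzero]
  · rcases Int.units_eq_one_or (Equiv.Perm.sign σ) with hσ | hσ
    · simpa [hσ] using hint σ
    · simpa [hσ] using (hint σ).fun_neg

end DbarMatrix

theorem hasDerivAt_integral_of_compact_support {X F : Type*} [TopologicalSpace X] [T2Space X]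
    [MeasurableSpace X] [OpensMeasurableSpace X] {μ : Measure X} [IsFiniteMeasureOnCompacts μ]
    [NormedAddCommGroup F] [NormedSpace ℝ F] {f f' : ℝ → X → F} {K : Set X} (hK : IsCompact K)
    (hf : ∀ t, Continuous (f t)) (hf' : Continuous (Function.uncurry f'))
    (hfK : ∀ t, ∀ x ∉ K, f t x = 0)
    (hderiv : ∀ t x, HasDerivAt (fun t => f t x) (f' t x) t) (t₀ : ℝ) :
    HasDerivAt (fun t => ∫ x, f t x ∂μ) (∫ x, f' t₀ x ∂μ) t₀ := by
  have hf'K (t : ℝ) (x : X) (hx : x ∉ K) : f' t x = 0 := by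
    have hzero := hderiv t x
    simp only [hfK _ x hx] at hzero
    exact hzero.unique (hasDerivAt_const t 0)
  have hint {g : X → F} (hg : Continuous g) (hgK : ∀ x ∉ K, g x = 0) : Integrable g μ :=
    hg.integrable_of_hasCompactSupport (HasCompactSupport.intro hK hgK)
  obtain ⟨C, hC⟩ := ((isCompact_closedBall t₀ 1).prod hK).exists_bound_of_continuousOn
    hf'.continuousOn
  refine (hasDerivAt_integral_of_dominated_loc_of_deriv_le (s := closedBall t₀ 1)
    (bound := K.indicator fun _ => C) (closedBall_mem_nhds t₀ one_pos)
    (Eventually.of_forall fun t => (hint (hf t) (hfK t)).aestronglyMeasurable)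
    (hint (hf t₀) (hfK t₀))
    (hint (hf'.comp (Continuous.prodMk_right t₀)) (hf'K t₀)).aestronglyMeasurable
    (Eventually.of_forall fun x t ht => ?_) ?_
    (Eventually.of_forall fun x t _ => hderiv t x)).2
  · by_cases hx : x ∈ K
    · simpa [hx] using hC (t, x) ⟨ht, hx⟩
    · simp [hx, hf'K t x hx]
  · exact (integrable_indicator_iff hK.measurableSet).2 (integrableOn_const hK.measure_lt_top.ne)

section LocalResolvent

variable {ι : Type*} [Fintype ι] {R : Type*} [NormedCommRing R] [NormedAlgebra ℂ R]
  {a : ι → R} {Ω : Set (ι → ℂ)} {ψ ψ₀ ψ₁ φ : (ι → ℂ) → R} {s s₀ s₁ r : ι → (ι → ℂ) → R}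

/-- `IsLocalResolvent a Ω ψ s` says that the smooth functions `s i` solve the Bezout equation
`∑ i, (zᵢ - aᵢ) * s i z = 1` for `z ∈ Ω` up to an error `ψ` which has compact support in `Ω`. For a
single `a`, this makes `s` a resolvent of `a` on `Ω` away from the support of `ψ`. -/
structure IsLocalResolvent (a : ι → R) (Ω : Set (ι → ℂ)) (ψ : (ι → ℂ) → R)
    (s : ι → (ι → ℂ) → R) : Prop where
  contDiff_error : ContDiff ℝ ∞ ψ
  contDiff (i : ι) : ContDiff ℝ ∞ (s i)
  hasCompactSupport : HasCompactSupport ψ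
  tsupport_subset : tsupport ψ ⊆ Ω
  sum_mul_eq {z : ι → ℂ} (hz : z ∈ Ω) : ∑ i, (algebraMap ℂ R (z i) - a i) * s i z = 1 - ψ z

namespace IsLocalResolvent

theorem error_eq_zero (h : IsLocalResolvent a Ω ψ s) {z : ι → ℂ} (hz : z ∉ Ω) : ψ z = 0 :=
  image_eq_zero_of_notMem_tsupport fun hz' => hz (h.tsupport_subset hz')

theorem add_smul_sub (h₀ : IsLocalResolvent a Ω ψ₀ s₀) (h₁ : IsLocalResolvent a Ω ψ₁ s₁) (t : ℝ) :
    IsLocalResolvent a Ω (ψ₀ + t • (ψ₁ - ψ₀)) (s₀ + t • (s₁ - s₀)) where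
  contDiff_error := h₀.contDiff_error.add
    (contDiff_const.smul (h₁.contDiff_error.sub h₀.contDiff_error))
  contDiff i := (h₀.contDiff i).add (contDiff_const.smul ((h₁.contDiff i).sub (h₀.contDiff i)))
  hasCompactSupport := h₀.hasCompactSupport.add
    ((h₁.hasCompactSupport.sub h₀.hasCompactSupport).smul_left (f := fun _ => t))
  tsupport_subset := (tsupport_add _ _).trans <| union_subset h₀.tsupport_subset <|
    (tsupport_smul_subset_right (fun _ => t) _).trans <|
    (tsupport_sub _ _).trans <| union_subset h₁.tsupport_subset h₀.tsupport_subset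
  sum_mul_eq {z} hz := by
    simp only [Pi.add_apply, Pi.smul_apply, Pi.sub_apply, mul_add, mul_smul_comm, mul_sub,
      Finset.sum_add_distrib, ← Finset.smul_sum, Finset.sum_sub_distrib, h₀.sum_mul_eq hz,
      h₁.sum_mul_eq hz]
    module

theorem map (h : IsLocalResolvent a Ω ψ s) {S : Type*} [NormedCommRing S] [NormedAlgebra ℂ S]
    (χ : R →ₐ[ℂ] S) (hχ : Continuous χ) :
    IsLocalResolvent (fun i => χ (a i)) Ω (fun z => χ (ψ z)) fun i z => χ (s i z) where
  contDiff_error :=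
    ((⟨χ.toLinearMap, hχ⟩ : R →L[ℂ] S).restrictScalars ℝ).contDiff.comp h.contDiff_error
  contDiff i := ((⟨χ.toLinearMap, hχ⟩ : R →L[ℂ] S).restrictScalars ℝ).contDiff.comp (h.contDiff i)
  hasCompactSupport := h.hasCompactSupport.comp_left (map_zero χ)
  tsupport_subset := (tsupport_comp_subset (map_zero χ) ψ).trans h.tsupport_subset
  sum_mul_eq {z} hz := by
    simpa using congrArg χ (h.sum_mul_eq hz)

theorem dbar_error (h : IsLocalResolvent a Ω ψ s) (hΩ : IsOpen Ω) {z : ι → ℂ} (hz : z ∈ Ω)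
    (v : ι → ℂ) :
    dbar v ψ z = ∑ i, (a i - algebraMap ℂ R (z i)) * dbar v (s i) z := by
  let L (i : ι) : (ι → ℂ) →L[ℂ] R := (Algebra.linearMap ℂ R).toContinuousLinearMap.comp
    (ContinuousLinearMap.proj i)
  have hL (i : ι) : DifferentiableAt ℂ (fun y : ι → ℂ => algebraMap ℂ R (y i) - a i) z :=
    (L i).differentiableAt.sub_const (a i)
  have hs (i : ι) := (h.contDiff i).differentiable (by simp) z
  have hψ : ψ =ᶠ[𝓝 z] fun y => 1 - ∑ i, (algebraMap ℂ R (y i) - a i) * s i y := by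
    filter_upwards [hΩ.mem_nhds hz] with y hy
    rw [h.sum_mul_eq hy, sub_sub_cancel]
  rw [dbar_congr hψ, dbar_const_sub, dbar_sum fun i _ => ((hL i).restrictScalars ℝ).fun_mul (hs i),
    ← Finset.sum_neg_distrib]
  refine Finset.sum_congr rfl fun i _ => ?_
  rw [dbar_mul ((hL i).restrictScalars ℝ) (hs i), dbar_eq_zero_of_differentiableAt (hL i)]
  ring

variable [DecidableEq ι]

theorem first_variation_eq_sum_det (h : IsLocalResolvent a Ω ψ s) (hΩ : IsOpen Ω)
    (hr : ∀ i, ContDiff ℝ ∞ (r i)) (hφ : ∀ z ∉ Ω, φ z = 0)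
    (hφr : ∀ z ∈ Ω, ∑ i, (algebraMap ℂ R (z i) - a i) * r i z = -φ z) (z : ι → ℂ) :
    φ z * (dbarMatrix s z).det
        + ψ z * ∑ i, ((dbarMatrix s z).updateCol i fun j => dbar (Pi.single j 1) (r i) z).det
      = ∑ i, (dbarMatrix (Function.update s i (ψ * r i)) z).det := by
  by_cases hz : z ∈ Ω
  · have hcol (i : ι) : (fun j => dbar (Pi.single j 1) (ψ * r i) z)
        = (ψ z • fun j => dbar (Pi.single j 1) (r i) z) + r i z • fun j =>
          ∑ k, (a k - algebraMap ℂ R (z k)) • dbarMatrix s z j k := by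
      ext j
      refine (dbar_mul (h.contDiff_error.differentiable (by simp) z)
        ((hr i).differentiable (by simp) z)).trans ?_
      rw [h.dbar_error hΩ hz, mul_comm (∑ _, _)]
      rfl
    have hdet (i : ι) : (dbarMatrix (Function.update s i (ψ * r i)) z).det
        = ψ z * ((dbarMatrix s z).updateCol i fun j => dbar (Pi.single j 1) (r i) z).det
          + r i z * (a i - algebraMap ℂ R (z i)) * (dbarMatrix s z).det := by
      rw [dbarMatrix_update, hcol, Matrix.det_updateCol_add, Matrix.det_updateCol_smul,
        Matrix.det_updateCol_smul, Matrix.det_updateCol_sum, smul_eq_mul, mul_assoc]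
    have hsum : ∑ i, r i z * (a i - algebraMap ℂ R (z i)) = φ z := by
      rw [← neg_neg (φ z), ← hφr z hz, ← Finset.sum_neg_distrib]
      exact Finset.sum_congr rfl fun i _ => by ring
    rw [Finset.sum_congr rfl fun i _ => hdet i, Finset.sum_add_distrib, ← Finset.mul_sum,
      ← Finset.sum_mul, hsum, add_comm]
  · have hdet (i : ι) : (dbarMatrix (Function.update s i (ψ * r i)) z).det = 0 := by
      refine det_dbarMatrix_eq_zero_of_notMem_tsupport (i := i) fun hz' => hz ?_
      rw [Function.update_self] at hz'
      exact h.tsupport_subset (tsupport_mul_subset_left hz')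
    simp [hdet, hφ z hz, h.error_eq_zero hz]

theorem integral_first_variation_eq_zero (h : IsLocalResolvent a Ω ψ s) (hΩ : IsOpen Ω)
    (hr : ∀ i, ContDiff ℝ ∞ (r i)) (hφ : ∀ z ∉ Ω, φ z = 0)
    (hφr : ∀ z ∈ Ω, ∑ i, (algebraMap ℂ R (z i) - a i) * r i z = -φ z) :
    ∫ z, (φ z * (dbarMatrix s z).det
      + ψ z * ∑ i, ((dbarMatrix s z).updateCol i fun j => dbar (Pi.single j 1) (r i) z).det)
      = 0 := by
  have hsmooth (i k : ι) : ContDiff ℝ ∞ (Function.update s i (ψ * r i) k) := by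
    rcases eq_or_ne k i with rfl | hk
    · rw [Function.update_self]
      exact h.contDiff_error.mul (hr k)
    · simpa [hk] using h.contDiff k
  have hcompact (i : ι) : HasCompactSupport (Function.update s i (ψ * r i) i) := by
    simpa using h.hasCompactSupport.mul_right
  simp only [h.first_variation_eq_sum_det hΩ hr hφ hφr]
  rw [integral_finsetSum _ fun i _ => ?_]
  · exact Finset.sum_eq_zero fun i _ => integral_det_dbarMatrix_eq_zero (hsmooth i) (hcompact i)
  · exact integrable_det_dbarMatrix (hsmooth i) (hcompact i)

theorem hasDerivAt_integral_add_smul_sub (h₀ : IsLocalResolvent a Ω ψ₀ s₀)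
    (h₁ : IsLocalResolvent a Ω ψ₁ s₁) (hΩ : IsOpen Ω) (t : ℝ) :
    HasDerivAt (fun t : ℝ => ∫ z, (ψ₀ + t • (ψ₁ - ψ₀)) z * (dbarMatrix (s₀ + t • (s₁ - s₀)) z).det)
      0 t := by
  have hr (i : ι) : ContDiff ℝ ∞ ((s₁ - s₀) i) := (h₁.contDiff i).sub (h₀.contDiff i)
  have hφ {z : ι → ℂ} (hz : z ∉ tsupport ψ₀ ∪ tsupport ψ₁) : ψ₀ z = 0 ∧ ψ₁ z = 0 := by
    rw [mem_union, not_or] at hz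
    exact ⟨image_eq_zero_of_notMem_tsupport hz.1, image_eq_zero_of_notMem_tsupport hz.2⟩
  have hψc : Continuous fun p : ℝ × (ι → ℂ) => (ψ₀ + p.1 • (ψ₁ - ψ₀)) p.2 := by
    have := h₀.contDiff_error.continuous
    have := h₁.contDiff_error.continuous
    simp only [Pi.add_apply, Pi.smul_apply, Pi.sub_apply]
    fun_prop
  have hMc := continuous_dbarMatrix_add_smul h₀.contDiff hr
  have hψ (t : ℝ) (z : ι → ℂ) :
      HasDerivAt (fun t : ℝ => (ψ₀ + t • (ψ₁ - ψ₀)) z) ((ψ₁ - ψ₀) z) t := by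
    simpa using! ((hasDerivAt_id t).smul_const ((ψ₁ - ψ₀) z)).const_add (ψ₀ z)
  refine (hasDerivAt_integral_of_compact_support
    (h₀.hasCompactSupport.isCompact.union h₁.hasCompactSupport.isCompact)
    (fun t => ?_) ?_ (fun t z hz => ?_) (fun t z => (hψ t z).mul
      (hasDerivAt_det_dbarMatrix_add_smul h₀.contDiff hr t z)) t).congr_deriv ?_
  · exact (hψc.comp (Continuous.prodMk_right t)).mul
      (hMc.comp (Continuous.prodMk_right t)).matrix_det
  · refine (((h₁.contDiff_error.sub h₀.contDiff_error).continuous.comp continuous_snd).mul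
      hMc.matrix_det).add (hψc.mul (continuous_finsetSum _ fun i _ => ?_))
    exact (hMc.matrix_updateCol i <| continuous_pi fun j =>
      (contDiff_dbar _ (hr i)).continuous.comp continuous_snd).matrix_det
  · simp [hφ hz]
  · refine integral_first_variation_eq_zero (h₀.add_smul_sub h₁ t) hΩ hr (fun z hz => ?_)
      fun z hz => ?_
    · simp [h₀.error_eq_zero hz, h₁.error_eq_zero hz]
    · simp only [Pi.sub_apply, mul_sub, Finset.sum_sub_distrib, h₀.sum_mul_eq hz, h₁.sum_mul_eq hz]
      abel

theorem integral_eq (h₀ : IsLocalResolvent a Ω ψ₀ s₀) (h₁ : IsLocalResolvent a Ω ψ₁ s₁)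
    (hΩ : IsOpen Ω) :
    ∫ z, ψ₀ z * (dbarMatrix s₀ z).det = ∫ z, ψ₁ z * (dbarMatrix s₁ z).det := by
  have hderiv := hasDerivAt_integral_add_smul_sub h₀ h₁ hΩ
  simpa using is_const_of_deriv_eq_zero (fun t => (hderiv t).differentiableAt)
    (fun t => (hderiv t).deriv) 0 1

theorem integral_map [CompleteSpace R] (h : IsLocalResolvent a Ω ψ s) {S : Type*}
    [NormedCommRing S] [NormedAlgebra ℂ S] [CompleteSpace S] (χ : R →ₐ[ℂ] S) (hχ : Continuous χ) :
    ∫ z, χ (ψ z) * (dbarMatrix (fun i y => χ (s i y)) z).det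
      = χ (∫ z, ψ z * (dbarMatrix s z).det) := by
  let L : R →L[ℂ] S := ⟨χ.toLinearMap, hχ⟩
  have hdet (z : ι → ℂ) : (dbarMatrix (fun i y => χ (s i y)) z).det = χ (dbarMatrix s z).det :=
    (congrArg Matrix.det (dbarMatrix_clm_comp L h.contDiff z)).trans (AlgHom.map_det χ _).symm
  have hint : Integrable fun z => ψ z * (dbarMatrix s z).det :=
    (h.contDiff_error.continuous.mul
      (continuous_dbarMatrix h.contDiff).matrix_det).integrable_of_hasCompactSupport
      h.hasCompactSupport.mul_right
  simp only [hdet, ← map_mul]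
  exact L.integral_comp_comm hint

end IsLocalResolvent
end LocalResolvent

section CauchyKernel

variable {δ : ℝ} {w : ℂ}

/-- A smooth function `ℂ → [0, 1]` equal to `1` near the origin and to `0` outside the disc of
radius `δ`. -/
def discCutoff (δ : ℝ) (w : ℂ) : ℝ :=
  1 - Real.smoothTransition (2 * ‖w‖ ^ 2 / δ ^ 2 - 1)

/-- The Cauchy kernel `1 / w`, smoothed inside the disc of radius `δ`. -/
def smoothCauchyKernel (δ : ℝ) (w : ℂ) : ℂ :=
  (1 - discCutoff δ w) / w

/-- Twice the `∂/∂w̄`-derivative of `smoothCauchyKernel δ`: a smooth approximation of the point mass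
at the origin, up to a constant factor. -/
def cauchyDensity (δ : ℝ) (w : ℂ) : ℝ :=
  4 / δ ^ 2 * deriv Real.smoothTransition (2 * ‖w‖ ^ 2 / δ ^ 2 - 1)

theorem discCutoff_nonneg : 0 ≤ discCutoff δ w :=
  sub_nonneg.mpr (Real.smoothTransition.le_one _)

theorem discCutoff_eq_zero (hδ : 0 < δ) (hw : δ ≤ ‖w‖) : discCutoff δ w = 0 := by
  refine sub_eq_zero.mpr (Real.smoothTransition.one_of_one_le ?_).symm
  have : 1 ≤ ‖w‖ ^ 2 / δ ^ 2 := (one_le_div (by positivity)).mpr (by gcongr)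
  linarith [mul_div_assoc 2 (‖w‖ ^ 2) (δ ^ 2)]

theorem discCutoff_eventuallyEq_one (δ : ℝ) : discCutoff δ =ᶠ[𝓝 0] 1 := by
  have hlim : Tendsto (fun w : ℂ => 2 * ‖w‖ ^ 2 / δ ^ 2 - 1) (𝓝 0) (𝓝 (-1)) :=
    Continuous.tendsto' (by fun_prop) _ _ (by simp)
  filter_upwards [hlim.eventually_le_const (by norm_num : (-1 : ℝ) < 0)] with w hw
  simp [discCutoff, Real.smoothTransition.zero_of_nonpos hw]

theorem contDiff_discCutoff (δ : ℝ) : ContDiff ℝ ∞ (discCutoff δ) := by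
  have hsq : ContDiff ℝ ∞ fun w : ℂ => ‖w‖ ^ 2 := contDiff_norm_sq ℝ
  exact contDiff_const.sub (Real.smoothTransition.contDiff.comp
    (((contDiff_const.mul hsq).div_const _).sub contDiff_const))

theorem mul_smoothCauchyKernel (δ : ℝ) (w : ℂ) :
    w * smoothCauchyKernel δ w = 1 - discCutoff δ w := by
  rcases eq_or_ne w 0 with rfl | hw
  · simp [(discCutoff_eventuallyEq_one δ).self_of_nhds]
  · exact mul_div_cancel₀ _ hw

theorem contDiff_smoothCauchyKernel (δ : ℝ) : ContDiff ℝ ∞ (smoothCauchyKernel δ) := by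
  refine contDiff_iff_contDiffAt.mpr fun w => ?_
  rcases eq_or_ne w 0 with rfl | hw
  · refine (contDiffAt_const (c := (0 : ℂ))).congr_of_eventuallyEq ?_
    filter_upwards [discCutoff_eventuallyEq_one δ] with w hw
    simp [smoothCauchyKernel, hw]
  · exact (contDiffAt_const.sub
      (Complex.ofRealCLM.contDiff.comp (contDiff_discCutoff δ)).contDiffAt).mul
      (contDiffAt_inv ℝ hw)

theorem continuous_cauchyDensity (δ : ℝ) : Continuous (cauchyDensity δ) := by
  have : Continuous (deriv Real.smoothTransition) :=
    Real.smoothTransition.contDiff.continuous_deriv (n := 1) (by simp)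
  unfold cauchyDensity
  fun_prop

theorem cauchyDensity_nonneg : 0 ≤ cauchyDensity δ w :=
  mul_nonneg (by positivity) Real.smoothTransition.monotone.deriv_nonneg

theorem dbar_discCutoff (δ : ℝ) (w : ℂ) :
    dbar 1 (fun w => (discCutoff δ w : ℂ)) w = -(w * cauchyDensity δ w) := by
  have hsq : HasFDerivAt (fun w : ℂ => ‖w‖ ^ 2) _ w := (hasStrictFDerivAt_norm_sq w).hasFDerivAt
  have hT := (Real.smoothTransition.contDiff (n := 1)).differentiable (by simp)
    (2 * ‖w‖ ^ 2 / δ ^ 2 - 1)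
  have hκ := Complex.ofRealCLM.hasFDerivAt.comp w
    ((hT.hasDerivAt.comp_hasFDerivAt w
      (((hsq.const_mul 2).mul_const (δ ^ 2)⁻¹).sub_const 1)).const_sub 1)
  have hfd : fderiv ℝ (fun w => (discCutoff δ w : ℂ)) w = _ := hκ.fderiv
  simp only [dbar, hfd, cauchyDensity, ContinuousLinearMap.comp_apply, neg_apply, smul_apply,
    innerSL_apply_apply, Complex.inner, Complex.ofRealCLM_apply, smul_eq_mul]
  simp
  linear_combination -(4 / (δ : ℂ) ^ 2 *
    (deriv Real.smoothTransition (2 * ‖w‖ ^ 2 / δ ^ 2 - 1) : ℝ)) * Complex.re_add_im w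

theorem dbar_smoothCauchyKernel (δ : ℝ) :
    dbar 1 (smoothCauchyKernel δ) = fun w => (cauchyDensity δ w : ℂ) := by
  refine (contDiff_dbar 1 (contDiff_smoothCauchyKernel δ)).continuous.ext_on
    (dense_compl_singleton 0)
    (Complex.continuous_ofReal.comp (continuous_cauchyDensity δ)) fun w hw => ?_
  refine mul_left_cancel₀ (mem_compl_singleton_iff.mp hw) ?_
  have hid : DifferentiableAt ℂ (fun w : ℂ => w) w := differentiableAt_id
  have hmul := dbar_mul (v := 1) (hid.restrictScalars ℝ)
    ((contDiff_smoothCauchyKernel δ).differentiable (by simp) w)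
  simpa [mul_smoothCauchyKernel, dbar_const_sub, dbar_discCutoff,
    dbar_eq_zero_of_differentiableAt hid, eq_comm] using hmul

theorem exists_discCutoff_pos_cauchyDensity_pos (hδ : 0 < δ) :
    ∃ w, 0 < discCutoff δ w ∧ 0 < cauchyDensity δ w := by
  have hhalf : Real.smoothTransition (1 / 2) < 1 :=
    Real.smoothTransition.lt_one_of_lt_one (by norm_num)
  obtain ⟨u, hu, hderiv⟩ := exists_deriv_eq_slope Real.smoothTransition
    (by norm_num : (0 : ℝ) < 1 / 2) Real.smoothTransition.continuous.continuousOn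
    ((Real.smoothTransition.contDiff (n := 1)).differentiable (by simp)).differentiableOn
  have hsq : 2 * ‖(√(δ ^ 2 * (u + 1) / 2) : ℂ)‖ ^ 2 / δ ^ 2 - 1 = u := by
    have : 0 ≤ δ ^ 2 * (u + 1) / 2 := by have := hu.1; positivity
    rw [Complex.norm_real, Real.norm_eq_abs, sq_abs, Real.sq_sqrt this]
    field_simp
    ring
  refine ⟨√(δ ^ 2 * (u + 1) / 2), ?_, ?_⟩
  · rw [discCutoff, hsq, sub_pos]
    exact (Real.smoothTransition.monotone hu.2.le).trans_lt hhalf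
  · rw [cauchyDensity, hsq, hderiv, Real.smoothTransition.zero]
    have := Real.smoothTransition.pos_of_pos (by norm_num : (0 : ℝ) < 1 / 2)
    rw [sub_zero]
    positivity

end CauchyKernel

section Polydisc

variable {ι : Type*} [Fintype ι] {δ : ℝ} {w : ι → ℂ}

/-- A smooth function `ℂⁿ → [0, 1]` with support in the closed polydisc of radius `δ`. -/
def polydiscCutoff (δ : ℝ) (w : ι → ℂ) : ℝ :=
  ∏ k, discCutoff δ (w k)

theorem dbar_comp_apply {F : Type*} [NormedAddCommGroup F] [NormedSpace ℂ F] {f : ℂ → F} {k : ι}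
    (hf : DifferentiableAt ℝ f (w k)) (v : ι → ℂ) :
    dbar v (fun y => f (y k)) w = dbar (v k) f (w k) := by
  simpa using dbar_comp_clm_sub (v := v) (z := w)
    (ContinuousLinearMap.proj (R := ℂ) (φ := fun _ : ι => ℂ) k) 0 (f := f) (by simpa using hf)

theorem contDiff_prod_discCutoff (δ : ℝ) (u : Finset ι) :
    ContDiff ℝ ∞ fun w : ι → ℂ => ∏ k ∈ u, (discCutoff δ (w k) : ℂ) :=
  contDiff_prod fun k _ => Complex.ofRealCLM.contDiff.comp
    ((contDiff_discCutoff δ).comp (contDiff_apply ℝ ℂ k))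

theorem contDiff_polydiscCutoff (δ : ℝ) :
    ContDiff ℝ ∞ (polydiscCutoff δ : (ι → ℂ) → ℝ) :=
  contDiff_prod fun k _ => (contDiff_discCutoff δ).comp (contDiff_apply ℝ ℂ k)

theorem polydiscCutoff_eq_zero (hδ : 0 < δ) (hw : δ ≤ ‖w‖) : polydiscCutoff δ w = 0 := by
  obtain ⟨k, hk⟩ : ∃ k, δ ≤ ‖w k‖ := by
    contrapose! hw
    exact (pi_norm_lt_iff hδ).mpr hw
  exact Finset.prod_eq_zero (Finset.mem_univ k) (discCutoff_eq_zero hδ hk)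

theorem tsupport_polydiscCutoff_sub_subset (hδ : 0 < δ) (x : ι → ℂ) :
    tsupport (fun z => (polydiscCutoff δ (z - x) : ℂ)) ⊆ closedBall x δ := by
  refine closure_minimal (fun z hz => ?_) isClosed_closedBall
  contrapose! hz
  rw [mem_closedBall_iff_norm, not_le] at hz
  simp [polydiscCutoff_eq_zero hδ hz.le]

variable [LinearOrder ι]

/-- Smooth solutions of `∑ i, wᵢ * polydiscKernel δ i w = 1 - polydiscCutoff δ w`, obtained by
eliminating one coordinate after another. -/
def polydiscKernel (δ : ℝ) (i : ι) (w : ι → ℂ) : ℂ :=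
  (∏ k with k < i, (discCutoff δ (w k) : ℂ)) * smoothCauchyKernel δ (w i)

theorem contDiff_polydiscKernel (δ : ℝ) (i : ι) : ContDiff ℝ ∞ (polydiscKernel δ i) :=
  (contDiff_prod_discCutoff δ _).mul
    ((contDiff_smoothCauchyKernel δ).comp (contDiff_apply ℝ ℂ i))

theorem sum_mul_polydiscKernel (δ : ℝ) (w : ι → ℂ) :
    ∑ i, w i * polydiscKernel δ i w = 1 - polydiscCutoff δ w := by
  have horder := Finset.prod_one_sub_ordered Finset.univ
    fun k => w k * smoothCauchyKernel δ (w k)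
  simp only [mul_smoothCauchyKernel, sub_sub_cancel] at horder
  rw [polydiscCutoff, Complex.ofReal_prod, horder, sub_sub_cancel]
  refine Finset.sum_congr rfl fun i _ => ?_
  rw [← mul_smoothCauchyKernel, polydiscKernel]
  ring

theorem dbar_polydiscKernel (δ : ℝ) {i j : ι} (hij : i ≤ j) (w : ι → ℂ) :
    dbar (Pi.single j 1) (polydiscKernel δ i) w
      = (∏ k with k < i, (discCutoff δ (w k) : ℂ)) *
        dbar ((Pi.single j 1 : ι → ℂ) i) (smoothCauchyKernel δ) (w i) := by
  have hφ := contDiff_smoothCauchyKernel δ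
  have hκ : ContDiff ℝ ∞ fun w => (discCutoff δ w : ℂ) :=
    Complex.ofRealCLM.contDiff.comp (contDiff_discCutoff δ)
  have hprod : dbar (Pi.single j 1)
      (fun w : ι → ℂ => ∏ k with k < i, (discCutoff δ (w k) : ℂ)) w = 0 := by
    refine (dbar_prod fun k _ =>
      (hκ.comp (contDiff_apply ℝ ℂ k)).differentiable (by simp) w).trans
      (Finset.sum_eq_zero fun k hk => mul_eq_zero_of_right _ ?_)
    have hkj : k ≠ j := ((Finset.mem_filter.mp hk).2.trans_le hij).ne
    refine (dbar_comp_apply (hκ.differentiable (by simp) _) _).trans ?_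
    rw [Pi.single_eq_of_ne hkj, dbar_zero_direction]
  refine (dbar_mul ((contDiff_prod_discCutoff δ _).differentiable (by simp) w)
    ((hφ.comp (contDiff_apply ℝ ℂ i)).differentiable (by simp) w)).trans ?_
  rw [hprod, zero_mul, add_zero]
  exact congrArg _ (dbar_comp_apply (hφ.differentiable (by simp) _) _)

theorem det_dbarMatrix_polydiscKernel (δ : ℝ) (w : ι → ℂ) :
    (dbarMatrix (polydiscKernel δ) w).det
      = ∏ i, (∏ k with k < i, (discCutoff δ (w k) : ℂ)) * cauchyDensity δ (w i) := by
  rw [Matrix.det_of_isUpperTriangular fun j i (hij : i < j) => ?_]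
  · refine Finset.prod_congr rfl fun i _ => ?_
    rw [dbarMatrix, Matrix.of_apply, dbar_polydiscKernel δ le_rfl, Pi.single_eq_same,
      dbar_smoothCauchyKernel]
  · rw [dbarMatrix, Matrix.of_apply, dbar_polydiscKernel δ hij.le, Pi.single_eq_of_ne hij.ne,
      dbar_zero_direction, mul_zero]

theorem integral_polydiscCutoff_mul_det_ne_zero (hδ : 0 < δ) :
    ∫ w : ι → ℂ, (polydiscCutoff δ w : ℂ) * (dbarMatrix (polydiscKernel δ) w).det ≠ 0 := by
  let density (w : ι → ℂ) : ℝ := polydiscCutoff δ w *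
    ∏ i, (∏ k with k < i, discCutoff δ (w k)) * cauchyDensity δ (w i)
  have hdensity (w : ι → ℂ) : (polydiscCutoff δ w : ℂ) * (dbarMatrix (polydiscKernel δ) w).det
      = density w := by
    rw [det_dbarMatrix_polydiscKernel]
    push_cast [density]
    rfl
  have hcont : Continuous density := by
    have := (contDiff_polydiscCutoff (ι := ι) δ).continuous
    have := (contDiff_discCutoff δ).continuous
    have := continuous_cauchyDensity δ
    fun_prop
  have hsupp : HasCompactSupport density :=
    HasCompactSupport.mul_right <| HasCompactSupport.intro (isCompact_closedBall 0 δ)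
      fun w hw => polydiscCutoff_eq_zero hδ (not_le.1 (mem_closedBall_zero_iff.not.1 hw)).le
  have hnonneg : 0 ≤ density := fun w =>
    mul_nonneg (Finset.prod_nonneg fun _ _ => discCutoff_nonneg) <|
      Finset.prod_nonneg fun _ _ => mul_nonneg
        (Finset.prod_nonneg fun _ _ => discCutoff_nonneg) cauchyDensity_nonneg
  obtain ⟨w, hκ, hd⟩ := exists_discCutoff_pos_cauchyDensity_pos hδ
  have hpos : 0 < density fun _ => w :=
    mul_pos (Finset.prod_pos fun _ _ => hκ) <|
      Finset.prod_pos fun _ _ => mul_pos (Finset.prod_pos fun _ _ => hκ) hd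
  simp only [hdensity]
  rw [integral_complex_ofReal, Complex.ofReal_ne_zero]
  exact (hcont.integral_pos_of_hasCompactSupport_nonneg_nonzero hsupp hnonneg hpos.ne').ne'

end Polydisc

section PolydiscResolvent

variable {ι : Type*} [Fintype ι] [LinearOrder ι] {δ : ℝ} {x : ι → ℂ} {Ω : Set (ι → ℂ)}

theorem isLocalResolvent_polydiscKernel (hδ : 0 < δ) (hx : closedBall x δ ⊆ Ω) :
    IsLocalResolvent x Ω (fun z => (polydiscCutoff δ (z - x) : ℂ))
      fun i z => polydiscKernel δ i (z - x) where
  contDiff_error := Complex.ofRealCLM.contDiff.comp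
    ((contDiff_polydiscCutoff δ).comp (contDiff_id.sub contDiff_const))
  contDiff i := (contDiff_polydiscKernel δ i).comp (contDiff_id.sub contDiff_const)
  hasCompactSupport := (isCompact_closedBall x δ).of_isClosed_subset (isClosed_tsupport _)
    (tsupport_polydiscCutoff_sub_subset hδ x)
  tsupport_subset := (tsupport_polydiscCutoff_sub_subset hδ x).trans hx
  sum_mul_eq {z} _ := sum_mul_polydiscKernel δ (z - x)

theorem isLocalResolvent_polydiscKernel_zero (hδ : 0 < δ) (hx : Disjoint (ball x δ) Ω) :
    IsLocalResolvent x Ω 0 fun i z => polydiscKernel δ i (z - x) where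
  contDiff_error := contDiff_const
  contDiff i := (contDiff_polydiscKernel δ i).comp (contDiff_id.sub contDiff_const)
  hasCompactSupport := HasCompactSupport.zero
  tsupport_subset := by simp [tsupport]
  sum_mul_eq {z} hz := by
    have hzx : δ ≤ ‖z - x‖ := by
      simpa [dist_eq_norm] using disjoint_right.1 hx hz
    simpa [polydiscCutoff_eq_zero hδ hzx] using sum_mul_polydiscKernel δ (z - x)

theorem integral_polydiscCutoff_sub_mul_det (δ : ℝ) (x : ι → ℂ) :
    ∫ z, (polydiscCutoff δ (z - x) : ℂ)
        * (dbarMatrix (fun (i : ι) z => polydiscKernel δ i (z - x)) z).det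
      = ∫ w : ι → ℂ, (polydiscCutoff δ w : ℂ) * (dbarMatrix (polydiscKernel δ) w).det := by
  have hshift (z : ι → ℂ) : dbarMatrix (fun i z => polydiscKernel δ i (z - x)) z
      = dbarMatrix (polydiscKernel δ) (z - x) := by
    ext j i
    exact dbar_comp_clm_sub (f := polydiscKernel δ i) (.id ℂ (ι → ℂ)) x
      ((contDiff_polydiscKernel δ i).differentiable (by simp) _)
  simp only [hshift]
  exact integral_sub_right_eq_self
    (fun w => (polydiscCutoff δ w : ℂ) * (dbarMatrix (polydiscKernel δ) w).det) x

end PolydiscResolvent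

section JointSpectrum
open scoped Manifold

variable {ι : Type*} {R : Type*} [NormedCommRing R] [NormedAlgebra ℂ R] {a : ι → R}
  {z : ι → ℂ}

/-- The joint spectrum of a family `a` of elements of a commutative complex algebra: the points `z`
such that the elements `zᵢ - aᵢ` do not generate the unit ideal. -/
def jointSpectrum (a : ι → R) : Set (ι → ℂ) :=
  {z | Ideal.span (range fun i => algebraMap ℂ R (z i) - a i) ≠ ⊤}

variable [Fintype ι]

theorem notMem_jointSpectrum_iff :
    z ∉ jointSpectrum a ↔ ∃ b : ι → R, ∑ i, (algebraMap ℂ R (z i) - a i) * b i = 1 := by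
  simp only [jointSpectrum, mem_ofPred_eq, not_not, Ideal.eq_top_iff_one,
    Ideal.mem_span_range_iff_exists_fun, mul_comm]

theorem contDiff_sum_algebraMap_sub_mul (a : ι → R) {s : ι → (ι → ℂ) → R}
    (hs : ∀ i, ContDiff ℝ ∞ (s i)) :
    ContDiff ℝ ∞ fun z : ι → ℂ => ∑ i, (algebraMap ℂ R (z i) - a i) * s i z := by
  refine ContDiff.sum fun i _ => ContDiff.mul (ContDiff.sub ?_ contDiff_const) (hs i)
  exact (((Algebra.linearMap ℂ R).toContinuousLinearMap.restrictScalars ℝ).comp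
    (ContinuousLinearMap.proj (R := ℝ) (φ := fun _ : ι => ℂ) i)).contDiff

theorem convex_setOf_sum_mul_eq_one (c : ι → R) : Convex ℝ {b : ι → R | ∑ i, c i * b i = 1} := by
  intro b hb b' hb' u v _ _ huv
  simp only [mem_ofPred_eq] at hb hb' ⊢
  simp only [Pi.add_apply, Pi.smul_apply, mul_add, mul_smul_comm, Finset.sum_add_distrib,
    ← Finset.smul_sum, hb, hb', ← add_smul, huv, one_smul]

variable [CompleteSpace R]

theorem exists_contDiffOn_bezout_of_notMem_jointSpectrum (hz : z ∉ jointSpectrum a) :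
    ∃ U ∈ 𝓝 z, ∃ s : (ι → ℂ) → ι → R, ContDiffOn ℝ ∞ s U ∧
      ∀ y ∈ U, ∑ i, (algebraMap ℂ R (y i) - a i) * s y i = 1 := by
  obtain ⟨b, hb⟩ := notMem_jointSpectrum_iff.1 hz
  let φ (y : ι → ℂ) : R := ∑ i, (algebraMap ℂ R (y i) - a i) * b i
  have hφ : ContDiff ℝ ∞ φ := contDiff_sum_algebraMap_sub_mul a fun i => contDiff_const
  refine ⟨φ ⁻¹' {u | IsUnit u}, hφ.continuous.continuousAt.preimage_mem_nhds
    (Units.isOpen.mem_nhds ?_), fun y i => b i * Ring.inverse (φ y),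
    contDiffOn_pi.2 fun i y hy => ?_, fun y hy => ?_⟩
  · simp [φ, hb]
  · have hinv : ContDiffAt ℝ ∞ Ring.inverse (φ y) := by
      obtain ⟨u, hu⟩ := hy
      exact hu ▸ contDiffAt_ringInverse ℝ u
    exact (contDiffAt_const.mul (hinv.comp y hφ.contDiffAt)).contDiffWithinAt
  · simp_rw [← mul_assoc, ← Finset.sum_mul]
    exact Ring.mul_inverse_cancel _ hy

theorem exists_contDiff_bezout {C : Set (ι → ℂ)} (hC : IsClosed C)
    (ha : Disjoint C (jointSpectrum a)) :
    ∃ s : ι → (ι → ℂ) → R, (∀ i, ContDiff ℝ ∞ (s i)) ∧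
      ∀ z ∈ C, ∑ i, (algebraMap ℂ R (z i) - a i) * s i z = 1 := by
  obtain ⟨g, hg⟩ := exists_contMDiffMap_forall_mem_convex_of_local (n := (⊤ : ℕ∞))
    𝓘(ℝ, ι → ℂ) (t := fun z => {b : ι → R | z ∈ C → ∑ i, (algebraMap ℂ R (z i) - a i) * b i = 1})
    (fun z => by
      by_cases hz : z ∈ C
      · simpa [hz] using convex_setOf_sum_mul_eq_one fun i => algebraMap ℂ R (z i) - a i
      · simpa [hz] using convex_univ)
    (fun z => by
      by_cases hz : z ∈ C
      · obtain ⟨U, hU, s, hs, hbez⟩ :=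
          exists_contDiffOn_bezout_of_notMem_jointSpectrum (disjoint_left.1 ha hz)
        exact ⟨U, hU, s, hs.contMDiffOn, fun y hy _ => hbez y hy⟩
      · exact ⟨Cᶜ, hC.isOpen_compl.mem_nhds hz, 0, contMDiffOn_const,
          fun y hy hyC => absurd hyC hy⟩)
  exact ⟨fun i z => g z i, fun i => contDiff_pi.1 g.contMDiff.contDiff i, fun z hz => hg z hz⟩

theorem exists_isLocalResolvent {A Ω : Set (ι → ℂ)} (hA : IsCompact A) (hΩ : IsOpen Ω)
    (hAΩ : A ⊆ Ω) (ha : Disjoint (closure Ω \ A) (jointSpectrum a)) :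
    ∃ ψ s, IsLocalResolvent a Ω ψ s := by
  obtain ⟨K, hK, hAK, hKΩ⟩ := exists_compact_between hA hΩ hAΩ
  obtain ⟨K', hK', hKK', hK'Ω⟩ := exists_compact_between hK hΩ hKΩ
  obtain ⟨s, hs, hbez⟩ := exists_contDiff_bezout (isClosed_closure.sdiff isOpen_interior)
    (ha.mono_left (sdiff_subset_sdiff_right hAK))
  obtain ⟨κ, hκ₁, hκ₀, -⟩ := exists_contMDiffMap_one_nhds_of_subset_interior (n := (⊤ : ℕ∞))
    𝓘(ℝ, ι → ℂ) hK.isClosed hKK'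
  let ψ (z : ι → ℂ) : R := κ z • (1 - ∑ i, (algebraMap ℂ R (z i) - a i) * s i z)
  have hψ : tsupport ψ ⊆ K' := closure_minimal
    (Function.support_subset_iff'.2 fun z hz => by simp [ψ, hκ₀ z hz]) hK'.isClosed
  refine ⟨ψ, s, ?_, hs, hK'.of_isClosed_subset (isClosed_tsupport ψ) hψ, hψ.trans hK'Ω,
    fun {z} hz => ?_⟩
  · exact κ.contMDiff.contDiff.smul (contDiff_const.sub (contDiff_sum_algebraMap_sub_mul a hs))
  · by_cases hzK : z ∈ K
    · simp [ψ, hκ₁.self_of_nhdsSet z hzK]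
    · simp [ψ, hbez z ⟨subset_closure hz, fun hz' => hzK (interior_subset hz')⟩]

end JointSpectrum

theorem exists_separating_element {ι : Type*} [Finite ι] {R : Type*} [NormedCommRing R]
    [NormedAlgebra ℂ R] [CompleteSpace R] {a : ι → R} {A B : Set (ι → ℂ)} (hA : IsCompact A)
    (hB : IsCompact B) (hAB : Disjoint A B) (ha : jointSpectrum a ⊆ A ∪ B) :
    ∃ e : R, ∃ c : ℂ, c ≠ 0 ∧ ∀ χ : R →ₐ[ℂ] ℂ, Continuous χ →
      ((fun i => χ (a i)) ∈ A → χ e = c) ∧ ((fun i => χ (a i)) ∈ B → χ e = 0) := by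
  cases nonempty_fintype ι
  classical
  let : LinearOrder ι := linearOrderOfSTO WellOrderingRel
  obtain ⟨δ, hδ, hd⟩ := hAB.exists_cthickenings hA hB.isClosed
  have hδ' : 0 < δ / 2 := half_pos hδ
  have hspec : Disjoint (closure (thickening δ A) \ A) (jointSpectrum a) := by
    rw [disjoint_left]
    rintro z ⟨hzΩ, hzA⟩ hz
    exact disjoint_left.1 hd (closure_thickening_subset_cthickening δ A hzΩ)
      (self_subset_cthickening B ((ha hz).resolve_left hzA))
  obtain ⟨ψ, s, hs⟩ :=
    exists_isLocalResolvent hA isOpen_thickening (self_subset_thickening hδ A) hspec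
  refine ⟨∫ z, ψ z * (dbarMatrix s z).det, _,
    integral_polydiscCutoff_mul_det_ne_zero (ι := ι) hδ', fun χ hχ => ?_⟩
  rw [← hs.integral_map χ hχ]
  refine ⟨fun hxA => ?_, fun hxB => ?_⟩
  · rw [← integral_polydiscCutoff_sub_mul_det (δ / 2) fun i => χ (a i)]
    refine (hs.map χ hχ).integral_eq (isLocalResolvent_polydiscKernel hδ' ?_) isOpen_thickening
    exact (closedBall_subset_ball (half_lt_self hδ)).trans (ball_subset_thickening hxA δ)
  · rw [(hs.map χ hχ).integral_eq (isLocalResolvent_polydiscKernel_zero hδ ?_) isOpen_thickening]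
    · simp
    · exact (hd.mono (thickening_subset_cthickening δ A) ((ball_subset_thickening hxB δ).trans
        (thickening_subset_cthickening δ B))).symm

theorem eval_mem_spectrum_aeval {ι : Type*} {R : Type*} [NormedCommRing R] [NormedAlgebra ℂ R]
    {a : ι → R} {z : ι → ℂ} (hz : z ∈ jointSpectrum a) (p : MvPolynomial ι ℂ) :
    eval z p ∈ spectrum ℂ (aeval a p) := by
  let J := Ideal.span (range fun i => algebraMap ℂ R (z i) - a i)
  have hquot (i : ι) : Ideal.Quotient.mkₐ ℂ J (a i) = algebraMap ℂ (R ⧸ J) (z i) :=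
    (Ideal.Quotient.eq (I := J) |>.2 (Ideal.subset_span (mem_range_self i))).symm
  have hmem : algebraMap ℂ R (eval z p) - aeval a p ∈ J := by
    refine Ideal.Quotient.eq.1 ?_
    change algebraMap ℂ (R ⧸ J) (eval z p) = Ideal.Quotient.mkₐ ℂ J (aeval a p)
    simp only [comp_aeval_apply, hquot]
    exact (aeval_algebraMap_apply (R ⧸ J) z p).symm
  exact fun hunit => hz (Ideal.eq_top_of_isUnit_mem J hmem hunit)

section PolynomialHull

variable {n : ℕ} {K L : Set (EuclideanSpace ℂ (Fin n))} {z : EuclideanSpace ℂ (Fin n)}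

theorem norm_eval_le_sSup (hK : Bornology.IsBounded K) (hz : z ∈ K)
    (p : MvPolynomial (Fin n) ℂ) :
    ‖eval (fun i => z i) p‖ ≤ sSup ((fun w => ‖eval (fun i => w i) p‖) '' K) := by
  have hp : Continuous fun w : EuclideanSpace ℂ (Fin n) => ‖eval (fun i => w i) p‖ :=
    ((MvPolynomial.continuous_eval p).comp (by fun_prop)).norm
  exact le_csSup ((hK.isCompact_closure.bddAbove_image hp.continuousOn).mono
    (image_mono subset_closure)) (mem_image_of_mem _ hz)

theorem sSup_norm_eval_nonneg (K : Set (EuclideanSpace ℂ (Fin n))) (p : MvPolynomial (Fin n) ℂ) :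
    0 ≤ sSup ((fun w => ‖eval (fun i => w i) p‖) '' K) :=
  Real.sSup_nonneg (forall_mem_image.2 fun _ _ => norm_nonneg _)

theorem subset_polyHull (hK : Bornology.IsBounded K) : K ⊆ polyHull K :=
  fun _ hz p => norm_eval_le_sSup hK hz p

theorem polyHull_mono (hL : Bornology.IsBounded L) (hKL : K ⊆ L) : polyHull K ⊆ polyHull L :=
  fun _ hz p => (hz p).trans <|
    Real.sSup_le (forall_mem_image.2 fun _ hw => norm_eval_le_sSup hL (hKL hw) p)
      (sSup_norm_eval_nonneg L p)

end PolynomialHull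

section PolynomialAlgebra

variable {n : ℕ} (X : Set (EuclideanSpace ℂ (Fin n))) [CompactSpace X]

/-- The algebra `P(X)` of uniform limits of polynomials on `X`. -/
def polynomialAlgebra : Subalgebra ℂ C(X, ℂ) :=
  (Algebra.adjoin ℂ (range fun i : Fin n => ⟨fun x : X => x.1 i, by fun_prop⟩)).topologicalClosure

/-- The coordinate functions, as elements of `P(X)`. -/
def coordinate (i : Fin n) : polynomialAlgebra X :=
  ⟨⟨fun x : X => x.1 i, by fun_prop⟩,
    Subalgebra.le_topologicalClosure _ (Algebra.subset_adjoin (mem_range_self i))⟩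

variable {X}

/-- Evaluation at a point of `X`, as a character of `P(X)`. -/
def evalCharacter (x : X) : polynomialAlgebra X →ₐ[ℂ] ℂ :=
  (ContinuousMap.evalAlgHom ℂ ℂ x).comp (polynomialAlgebra X).val

theorem continuous_evalCharacter (x : X) : Continuous (evalCharacter x) :=
  (continuous_eval_const x).comp continuous_subtype_val

theorem evalCharacter_aeval_coordinate (x : X) (p : MvPolynomial (Fin n) ℂ) :
    evalCharacter x (aeval (coordinate X) p) = eval (fun i => x.1 i) p := by
  rw [comp_aeval_apply, aeval_eq_eval]
  rfl

theorem exists_polynomial_norm_eval_sub_lt (f : polynomialAlgebra X) {ε : ℝ} (hε : 0 < ε) :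
    ∃ p : MvPolynomial (Fin n) ℂ, ∀ x : X, ‖eval (fun i => x.1 i) p - evalCharacter x f‖ < ε := by
  obtain ⟨g, hg, hfg⟩ := Metric.mem_closure_iff.1 f.2 ε hε
  rw [SetLike.mem_coe, Algebra.adjoin_range_eq_range_aeval] at hg
  obtain ⟨p, rfl⟩ := hg
  have hfp : dist (f : C(X, ℂ)) (aeval (coordinate X) p : polynomialAlgebra X) < ε := by
    change dist _ ((polynomialAlgebra X).val _) < ε
    rwa [comp_aeval_apply]
  refine ⟨p, fun x => ?_⟩
  rw [← evalCharacter_aeval_coordinate, ← dist_eq_norm, dist_comm]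
  exact (ContinuousMap.dist_apply_le_dist x).trans_lt hfp

instance : CompleteSpace (polynomialAlgebra X) :=
  (Subalgebra.isClosed_topologicalClosure _).completeSpace_coe

theorem jointSpectrum_coordinate_subset :
    jointSpectrum (coordinate X) ⊆ WithLp.ofLp '' polyHull X := by
  refine fun z hz => ⟨WithLp.toLp 2 z, fun p => ?_, rfl⟩
  have hone : ‖(1 : polynomialAlgebra X)‖ ≤ 1 :=
    (ContinuousMap.norm_le _ zero_le_one).2 fun x => by simp
  have hp : ‖aeval (coordinate X) p‖ ≤ sSup ((fun w => ‖eval (fun i => w i) p‖) '' X) :=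
    (ContinuousMap.norm_le _ (sSup_norm_eval_nonneg X p)).2 fun x => by
      have hx := norm_eval_le_sSup (isCompact_iff_compactSpace.2 ‹_›).isBounded x.2 p
      rwa [← evalCharacter_aeval_coordinate] at hx
  exact ((spectrum.norm_le_norm_mul_of_mem (eval_mem_spectrum_aeval hz p)).trans
    (mul_le_of_le_one_right (norm_nonneg _) hone)).trans hp

end PolynomialAlgebra

section Separation

variable {n : ℕ} {S T K L : Set (EuclideanSpace ℂ (Fin n))} {z : EuclideanSpace ℂ (Fin n)}

theorem IsPolyConvex.exists_polynomial_separating (hST : IsPolyConvex (S ∪ T)) (hS : IsCompact S)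
    (hT : IsCompact T) (hdisj : Disjoint S T) {ε : ℝ} (hε : 0 < ε) :
    ∃ p : MvPolynomial (Fin n) ℂ, (∀ x ∈ S, ‖eval (fun i => x i) p - 1‖ < ε) ∧
      ∀ x ∈ T, ‖eval (fun i => x i) p‖ < ε := by
  have : CompactSpace ↥(S ∪ T) := isCompact_iff_compactSpace.1 (hS.union hT)
  have hcont : Continuous (WithLp.ofLp : EuclideanSpace ℂ (Fin n) → Fin n → ℂ) := by fun_prop
  obtain ⟨e, c, hc, he⟩ := exists_separating_element (a := coordinate (S ∪ T))
    (hS.image hcont) (hT.image hcont)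
    ((disjoint_image_iff (WithLp.ofLp_injective 2)).2 hdisj)
    (jointSpectrum_coordinate_subset.trans (by rw [hST, image_union]))
  have hχ (x : ↥(S ∪ T)) := he (evalCharacter x) (continuous_evalCharacter x)
  obtain ⟨p, hp⟩ := exists_polynomial_norm_eval_sub_lt (c⁻¹ • e) hε
  refine ⟨p, fun x hx => ?_, fun x hx => ?_⟩
  · have he₁ := (hχ ⟨x, .inl hx⟩).1 (mem_image_of_mem _ hx)
    simpa [he₁, hc] using hp ⟨x, .inl hx⟩
  · have he₀ := (hχ ⟨x, .inr hx⟩).2 (mem_image_of_mem _ hx)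
    simpa [he₀] using hp ⟨x, .inr hx⟩

theorem sSup_norm_eval_mul_union_le {ε : ℝ} {p : MvPolynomial (Fin n) ℂ} (hε : 0 < ε)
    (hK : Bornology.IsBounded K) (hL : Bornology.IsBounded L)
    (hpK : ∀ x ∈ K, ‖eval (fun i => x i) p - 1‖ < ε) (hpL : ∀ x ∈ L, ‖eval (fun i => x i) p‖ < ε)
    (q : MvPolynomial (Fin n) ℂ) :
    sSup ((fun w => ‖eval (fun i => w i) (q * p)‖) '' (K ∪ L))
      ≤ sSup ((fun w => ‖eval (fun i => w i) q‖) '' K) * (1 + ε)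
        + sSup ((fun w => ‖eval (fun i => w i) q‖) '' L) * ε := by
  have hKq := sSup_norm_eval_nonneg K q
  have hLq := sSup_norm_eval_nonneg L q
  refine Real.sSup_le (forall_mem_image.2 fun x hx => ?_) (by positivity)
  rw [eval_mul, norm_mul]
  rcases hx with hx | hx
  · have hp : ‖eval (fun i => x i) p‖ ≤ 1 + ε := by
      have := norm_le_norm_add_norm_sub' (eval (fun i => x i) p) 1
      rw [norm_one] at this
      linarith [hpK x hx]
    exact le_add_of_le_of_nonneg (mul_le_mul (norm_eval_le_sSup hK hx q) hp (norm_nonneg _) hKq)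
      (by positivity)
  · exact le_add_of_nonneg_of_le (by positivity)
      (mul_le_mul (norm_eval_le_sSup hL hx q) (hpL x hx).le (norm_nonneg _) hLq)

theorem IsPolyConvex.mem_polyHull_of_mem_polyHull_union (hST : IsPolyConvex (S ∪ T))
    (hS : IsCompact S) (hT : IsCompact T) (hdisj : Disjoint S T) (hK : K ⊆ S) (hL : L ⊆ T)
    (hzS : z ∈ S) (hz : z ∈ polyHull (K ∪ L)) : z ∈ polyHull K := by
  intro q
  set kq := sSup ((fun w => ‖eval (fun i => w i) q‖) '' K)
  set lq := sSup ((fun w => ‖eval (fun i => w i) q‖) '' L)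
  have hbound {ε : ℝ} (hε : 0 < ε) :
      ‖eval (fun i => z i) q‖ * (1 - ε) ≤ kq * (1 + ε) + lq * ε := by
    obtain ⟨p, hpS, hpT⟩ := hST.exists_polynomial_separating hS hT hdisj hε
    have hpz : 1 - ε ≤ ‖eval (fun i => z i) p‖ := by
      have := norm_le_norm_add_norm_sub (eval (fun i => z i) p) 1
      rw [norm_one] at this
      linarith [hpS z hzS]
    calc ‖eval (fun i => z i) q‖ * (1 - ε)
        ≤ ‖eval (fun i => z i) q‖ * ‖eval (fun i => z i) p‖ := by gcongr
      _ = ‖eval (fun i => z i) (q * p)‖ := by rw [eval_mul, norm_mul]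
      _ ≤ _ := (hz (q * p)).trans <| sSup_norm_eval_mul_union_le hε (hS.isBounded.subset hK)
          (hT.isBounded.subset hL) (fun x hx => hpS x (hK hx)) (fun x hx => hpT x (hL hx)) q
  have hleft : Tendsto (fun ε => ‖eval (fun i => z i) q‖ * (1 - ε)) (𝓝[>] 0)
      (𝓝 ‖eval (fun i => z i) q‖) :=
    (Continuous.tendsto' (by fun_prop) _ _ (by simp)).mono_left nhdsWithin_le_nhds
  have hright : Tendsto (fun ε => kq * (1 + ε) + lq * ε) (𝓝[>] 0) (𝓝 kq) :=
    (Continuous.tendsto' (by fun_prop) _ _ (by simp)).mono_left nhdsWithin_le_nhds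
  exact le_of_tendsto_of_tendsto hleft hright
    (eventually_mem_nhdsWithin.mono fun ε hε => hbound hε)

end Separation

/-- Let `S ⊆ ℂᵐ` be a compact polynomially convex set disjoint from a compact set `T` such that
`S ∪ T` is polynomially convex. If `S' ⊆ S` is compact polynomially convex, then `S' ∪ T` is
polynomially convex. -/
theorem stmt_5 (m : ℕ) (S T S' : Set (EuclideanSpace ℂ (Fin m)))
    (hSc : IsCompact S) (hSpc : IsPolyConvex S) (hTc : IsCompact T) (hdisj : Disjoint S T)
    (hSTpc : IsPolyConvex (S ∪ T)) (hsub : S' ⊆ S) (hS'c : IsCompact S')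
    (hS'pc : IsPolyConvex S') :
    IsPolyConvex (S' ∪ T) := by
  refine Subset.antisymm (fun z hz => ?_) (subset_polyHull (hS'c.union hTc).isBounded)
  have hzST : z ∈ S ∪ T := hSTpc.subset <|
    polyHull_mono (hSc.union hTc).isBounded (union_subset_union_left T hsub) hz
  refine hzST.imp (fun hzS => hS'pc.subset ?_) id
  exact hSTpc.mem_polyHull_of_mem_polyHull_union hSc hTc hdisj hsub Subset.rfl hzS hz
end
end

section
/- Let L ⊆ ℂᴺ be compact polynomially convex and S ⊆ L × ℂⁿ a compact polynomially convex set disjoint from ℂᴺ × {0}. Then there exists a closed ball B ⊆ ℂⁿ centred at 0 of positive radius such that (L × B) ∩ S = ∅ and (L × B) ∪ S is polynomially convex. -/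
noncomputable section
open Set Metric MvPolynomial

/-!
The union of two compact polynomially convex sets `S` and `T` is polynomially convex as soon as
some polynomial `q` is close to `0` on `S` and close to `1` on `T`. On the hull of `S ∪ T` the
product `q (1 - q)` is small, so `q` is close to `0` or to `1` at each point of the hull. In the
first case, iterating `t ↦ 3t² - 2t³` on `q` gives cutoffs tending to `0` on `S` and at the point,
and to `1` on `T`, which confine the point to the hull of `S`; the second case is symmetric.

Such a `q` exists when `T` is near `ℂᴺ × {0}` and `S` is disjoint from it. The characters of the
uniform closure of the polynomials on `S` are evaluations at points of the hull of `S`, where the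
last `n` coordinates have no common zero. By Gelfand theory these coordinates generate the unit
ideal of the closure, so `1` is uniformly approximated on `S` by polynomials vanishing on
`ℂᴺ × {0}`. By compactness of `L`, `T = L × B` is near `ℂᴺ × {0}` for a small ball `B`.
-/

open Filter Topology

section FunctionHull

variable {X Y R R' : Type*} [TopologicalSpace X] [TopologicalSpace Y]
  [CommRing R] [Algebra ℂ R] [CommRing R'] [Algebra ℂ R']
  {ev : R →ₐ[ℂ] C(X, ℂ)} {ev' : R' →ₐ[ℂ] C(Y, ℂ)}

/-- The hull of `K` with respect to an algebra of continuous functions, given as the image of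
`ev`. For the algebra of polynomials on `ℂⁿ` this is the polynomial hull. -/
def functionHull (ev : R →ₐ[ℂ] C(X, ℂ)) (K : Set X) : Set X :=
  {x | ∀ f, ‖ev f x‖ ≤ sSup ((fun y => ‖ev f y‖) '' K)}

theorem norm_le_of_mem_functionHull {K : Set X} {x : X} (hx : x ∈ functionHull ev K) {f : R}
    {c : ℝ} (hc : 0 ≤ c) (hf : ∀ y ∈ K, ‖ev f y‖ ≤ c) : ‖ev f x‖ ≤ c :=
  (hx f).trans (Real.sSup_le (forall_mem_image.2 hf) hc)

theorem norm_le_sSup_norm {K : Set X} (hK : IsCompact K) (f : C(X, ℂ)) {x : X} (hx : x ∈ K) :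
    ‖f x‖ ≤ sSup ((fun y => ‖f y‖) '' K) :=
  le_csSup (hK.bddAbove_image f.continuous.norm.continuousOn) (mem_image_of_mem _ hx)

theorem sSup_norm_nonneg (K : Set X) (f : C(X, ℂ)) : 0 ≤ sSup ((fun y => ‖f y‖) '' K) :=
  Real.sSup_nonneg (forall_mem_image.2 fun _ _ => norm_nonneg _)

theorem subset_functionHull {K : Set X} (hK : IsCompact K) : K ⊆ functionHull ev K :=
  fun _ hx f => norm_le_sSup_norm hK (ev f) hx

theorem mapsTo_functionHull {φ : X → Y} {ψ : R' → R} (hψ : ∀ f x, ev (ψ f) x = ev' f (φ x))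
    {K : Set X} {K' : Set Y} (hK' : IsCompact K') (hφ : MapsTo φ K K') :
    MapsTo φ (functionHull ev K) (functionHull ev' K') := fun x hx f => by
  rw [← hψ]
  refine norm_le_of_mem_functionHull hx (sSup_norm_nonneg _ _) fun y hy => ?_
  rw [hψ]
  exact norm_le_sSup_norm hK' (ev' f) (hφ hy)

theorem functionHull_mono {K K' : Set X} (hK' : IsCompact K') (h : K ⊆ K') :
    functionHull ev K ⊆ functionHull ev K' :=
  mapsTo_functionHull (φ := id) (ψ := id) (fun _ _ => rfl) hK' h

end FunctionHull

section Smoothstep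

/-- The cubic `3t² - 2t³`, whose iterates push values near `0` to `0` and values near `1` to `1`:
both are attracting fixed points. -/
def smoothstep {A : Type*} [CommRing A] (t : A) : A := 3 * t ^ 2 - 2 * t ^ 3

variable {A B : Type*} [CommRing A] [CommRing B]

theorem map_smoothstep_iterate (φ : A →+* B) (m : ℕ) (t : A) :
    φ (smoothstep^[m] t) = smoothstep^[m] (φ t) :=
  Function.Semiconj.iterate_right (f := φ)
    (fun t => by simp only [smoothstep, map_sub, map_mul, map_pow, map_ofNat]) m t

theorem one_sub_smoothstep_iterate (m : ℕ) (t : A) :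
    1 - smoothstep^[m] t = smoothstep^[m] (1 - t) :=
  Function.Semiconj.iterate_right (f := (1 - ·)) (fun t => by simp only [smoothstep]; ring) m t

theorem norm_smoothstep_le {t : ℂ} (ht : ‖t‖ ≤ 1 / 4) : ‖smoothstep t‖ ≤ 7 / 8 * ‖t‖ := by
  have hfactor : ‖3 - 2 * t‖ ≤ 7 / 2 := by
    calc ‖3 - 2 * t‖ ≤ ‖(3 : ℂ)‖ + ‖2 * t‖ := norm_sub_le _ _
      _ = 3 + 2 * ‖t‖ := by simp
      _ ≤ 7 / 2 := by linarith
  calc ‖smoothstep t‖ = ‖t‖ * ‖3 - 2 * t‖ * ‖t‖ := by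
        rw [← norm_mul, ← norm_mul, smoothstep]; ring_nf
    _ ≤ 1 / 4 * (7 / 2) * ‖t‖ := by gcongr
    _ = 7 / 8 * ‖t‖ := by ring

theorem norm_smoothstep_iterate_le {t : ℂ} (ht : ‖t‖ ≤ 1 / 4) (m : ℕ) :
    ‖smoothstep^[m] t‖ ≤ (7 / 8) ^ m * (1 / 4) := by
  induction m with
  | zero => simpa using ht
  | succ m ih =>
    have hm : (7 / 8 : ℝ) ^ m ≤ 1 := pow_le_one₀ (by norm_num) (by norm_num)
    rw [Function.iterate_succ_apply', pow_succ']
    linarith [norm_smoothstep_le (t := smoothstep^[m] t) (by linarith)]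

end Smoothstep

section Kallin

variable {X R : Type*} [TopologicalSpace X] [CommRing R] [Algebra ℂ R] {ev : R →ₐ[ℂ] C(X, ℂ)}
  {S T : Set X} {q : R}

theorem norm_mul_one_sub_le_of_mem_functionHull_union (hS : IsCompact S) (hT : IsCompact T)
    {χ : R} {δ : ℝ} (hχS : ∀ y ∈ S, ‖ev χ y‖ ≤ δ) (hχT : ∀ y ∈ T, ‖1 - ev χ y‖ ≤ δ) {x : X}
    (hx : x ∈ functionHull ev (S ∪ T)) (hχx : ‖ev χ x‖ ≤ δ) (p : R) :
    ‖ev p x‖ * (1 - δ) ≤ max (sSup ((fun y => ‖ev p y‖) '' S) * (1 + δ))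
      (sSup ((fun y => ‖ev p y‖) '' T) * δ) := by
  have hδ : 0 ≤ δ := (norm_nonneg _).trans hχx
  have hcS := sSup_norm_nonneg S (ev p)
  have hcT := sSup_norm_nonneg T (ev p)
  have hcutoff (y : X) : ‖ev (p * (1 - χ)) y‖ = ‖ev p y‖ * ‖1 - ev χ y‖ := by simp
  have hlower : 1 - δ ≤ ‖1 - ev χ x‖ := by
    have := norm_sub_norm_le 1 (ev χ x)
    rw [norm_one] at this
    linarith
  have hupper {w : ℂ} (hw : ‖w‖ ≤ δ) : ‖1 - w‖ ≤ 1 + δ := by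
    have := norm_sub_le 1 w
    rw [norm_one] at this
    linarith
  calc ‖ev p x‖ * (1 - δ) ≤ ‖ev (p * (1 - χ)) x‖ := by rw [hcutoff]; gcongr
    _ ≤ _ := norm_le_of_mem_functionHull hx (le_max_of_le_right (by positivity)) ?_
  rintro y (hy | hy) <;> rw [hcutoff]
  · refine le_max_of_le_left ?_
    gcongr
    exacts [norm_le_sSup_norm hS (ev p) hy, hupper (hχS y hy)]
  · refine le_max_of_le_right ?_
    gcongr
    exacts [norm_le_sSup_norm hT (ev p) hy, hχT y hy]

theorem mem_functionHull_left_of_union (hS : IsCompact S) (hT : IsCompact T)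
    (hqS : ∀ y ∈ S, ‖ev q y‖ ≤ 1 / 4) (hqT : ∀ y ∈ T, ‖1 - ev q y‖ ≤ 1 / 4) {x : X}
    (hx : x ∈ functionHull ev (S ∪ T)) (hqx : ‖ev q x‖ ≤ 1 / 4) : x ∈ functionHull ev S := by
  intro p
  let δ (m : ℕ) : ℝ := (7 / 8) ^ m * (1 / 4)
  have hδ : Tendsto δ atTop (𝓝 0) := by
    simpa using (tendsto_pow_atTop_nhds_zero_of_lt_one (r := (7 / 8 : ℝ)) (by norm_num)
      (by norm_num)).mul_const (1 / 4)
  have heval (m : ℕ) (y : X) : ev (smoothstep^[m] q) y = smoothstep^[m] (ev q y) :=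
    map_smoothstep_iterate ((ContinuousMap.evalAlgHom ℂ ℂ y).comp ev).toRingHom m q
  have hbound (m : ℕ) := norm_mul_one_sub_le_of_mem_functionHull_union hS hT
    (χ := smoothstep^[m] q) (δ := δ m)
    (fun y hy => by rw [heval]; exact norm_smoothstep_iterate_le (hqS y hy) m)
    (fun y hy => by
      rw [heval, one_sub_smoothstep_iterate]
      exact norm_smoothstep_iterate_le (hqT y hy) m)
    hx (by rw [heval]; exact norm_smoothstep_iterate_le hqx m) p
  have hlim := le_of_tendsto_of_tendsto' ((hδ.const_sub 1).const_mul _)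
    (((hδ.const_add 1).const_mul _).max (hδ.const_mul _)) hbound
  simpa [sSup_norm_nonneg] using hlim

theorem norm_le_or_norm_one_sub_le_of_norm_mul_le {w : ℂ} (hw : ‖w * (1 - w)‖ ≤ 1 / 8) :
    ‖w‖ ≤ 1 / 4 ∨ ‖1 - w‖ ≤ 1 / 4 := by
  by_contra! h
  have hsum : 1 ≤ ‖w‖ + ‖1 - w‖ := by simpa using norm_add_le w (1 - w)
  rw [norm_mul] at hw
  nlinarith [mul_pos (sub_pos.2 h.1) (sub_pos.2 h.2)]

/-- A form of Kallin's lemma. -/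
theorem functionHull_union (hS : IsCompact S) (hT : IsCompact T)
    (hqS : ∀ y ∈ S, ‖ev q y‖ ≤ 1 / 10) (hqT : ∀ y ∈ T, ‖1 - ev q y‖ ≤ 1 / 10) :
    functionHull ev (S ∪ T) = functionHull ev S ∪ functionHull ev T := by
  refine Subset.antisymm (fun x hx => ?_) (union_subset
    (functionHull_mono (hS.union hT) subset_union_left)
    (functionHull_mono (hS.union hT) subset_union_right))
  have hqS' (y) (hy : y ∈ S) : ‖ev q y‖ ≤ 1 / 4 := (hqS y hy).trans (by norm_num)
  have hqT' (y) (hy : y ∈ T) : ‖1 - ev q y‖ ≤ 1 / 4 := (hqT y hy).trans (by norm_num)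
  have hmul {w : ℂ} (hw : ‖w‖ ≤ 1 / 10) : ‖w * (1 - w)‖ ≤ 1 / 8 := by
    have : ‖1 - w‖ ≤ 1 + ‖w‖ := by simpa using norm_sub_le 1 w
    rw [norm_mul]
    nlinarith [norm_nonneg w]
  have hqx : ‖ev (q * (1 - q)) x‖ ≤ 1 / 8 := by
    refine norm_le_of_mem_functionHull hx (by norm_num) ?_
    rintro y (hy | hy)
    · simpa using hmul (hqS y hy)
    · simpa [mul_comm] using hmul (hqT y hy)
  rcases norm_le_or_norm_one_sub_le_of_norm_mul_le (w := ev q x) (by simpa using hqx) with h | h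
  · exact .inl (mem_functionHull_left_of_union hS hT hqS' hqT' hx h)
  · exact .inr (mem_functionHull_left_of_union (q := 1 - q) hT hS (by simpa using hqT')
      (by simpa using hqS') (union_comm S T ▸ hx) (by simpa using h))

end Kallin

section Ideals

theorem ideal_map_subset_closure_image {R A : Type*} [Semiring R] [Semiring A]
    [TopologicalSpace A] [IsTopologicalSemiring A] {f : R →+* A} (hf : DenseRange f) (J : Ideal R) :
    (J.map f : Set A) ⊆ closure (f '' J) := by
  intro a ha
  induction ha using Submodule.span_induction with
  | mem a ha => exact subset_closure ha
  | zero => exact subset_closure ⟨0, J.zero_mem, map_zero f⟩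
  | add a b _ _ iha ihb =>
    refine map_mem_closure₂ continuous_add iha ihb ?_
    rintro _ ⟨g, hg, rfl⟩ _ ⟨h, hh, rfl⟩
    exact ⟨g + h, J.add_mem hg hh, map_add f g h⟩
  | smul a b _ ihb =>
    refine map_mem_closure₂ continuous_mul (hf a) ihb ?_
    rintro _ ⟨r, rfl⟩ _ ⟨g, hg, rfl⟩
    exact ⟨r * g, J.mul_mem_left r hg, map_mul f r g⟩

theorem ideal_eq_top_of_forall_algHom_ne_zero {A : Type*} [NormedCommRing A] [NormedAlgebra ℂ A]
    [CompleteSpace A] {I : Ideal A} (hI : ∀ φ : A →ₐ[ℂ] ℂ, ∃ a ∈ I, φ a ≠ 0) : I = ⊤ := by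
  by_contra hI_ne_top
  obtain ⟨M, hM, hIM⟩ := Ideal.exists_le_maximal I hI_ne_top
  obtain ⟨a, haI, ha⟩ := hI (WeakDual.CharacterSpace.toAlgHom M.toCharacterSpace)
  exact ha (M.toCharacterSpace_apply_eq_zero_of_mem (hIM haI))

variable {R : Type*} [CommRing R] [Algebra ℂ R]

theorem one_mem_closure_image_ideal_of_denseRange {A : Type*} [NormedCommRing A]
    [NormedAlgebra ℂ A] [CompleteSpace A] {f : R →ₐ[ℂ] A} (hf : DenseRange f) {J : Ideal R}
    (hJ : ∀ φ : A →ₐ[ℂ] ℂ, ∃ g ∈ J, φ (f g) ≠ 0) : 1 ∈ closure (f '' J) := by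
  have htop : J.map (f : R →+* A) = ⊤ := ideal_eq_top_of_forall_algHom_ne_zero fun φ =>
    let ⟨g, hgJ, hg⟩ := hJ φ
    ⟨f g, Ideal.mem_map_of_mem _ hgJ, hg⟩
  exact ideal_map_subset_closure_image (f := (f : R →+* A)) hf J (htop ▸ Submodule.mem_top)

theorem one_mem_closure_image_ideal {A : Type*} [NormedCommRing A] [NormOneClass A]
    [NormedAlgebra ℂ A] [CompleteSpace A] {f : R →ₐ[ℂ] A} {J : Ideal R}
    (hJ : ∀ φ : R →ₐ[ℂ] ℂ, (∀ a, ‖φ a‖ ≤ ‖f a‖) → ∃ g ∈ J, φ g ≠ 0) : 1 ∈ closure (f '' J) := by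
  let P : Subalgebra ℂ A := f.range.topologicalClosure
  have : CompleteSpace P := (Subalgebra.isClosed_topologicalClosure _).completeSpace_coe
  have : NormOneClass P := ⟨norm_one (α := A)⟩
  let ρ : R →ₐ[ℂ] P := f.codRestrict P fun a => Subalgebra.le_topologicalClosure _ ⟨a, rfl⟩
  have hρ : DenseRange ρ := fun a => by
    rw [closure_subtype, ← range_comp]
    exact a.2
  have hone : 1 ∈ closure (ρ '' J) := one_mem_closure_image_ideal_of_denseRange hρ fun φ =>
    hJ (φ.comp ρ) fun a => AlgHom.norm_apply_le_self φ (ρ a)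
  refine map_mem_closure (f := ((↑) : P → A)) continuous_subtype_val hone ?_
  rintro _ ⟨g, hg, rfl⟩
  exact ⟨g, hg, rfl⟩

variable {X : Type*} [TopologicalSpace X] {ev : R →ₐ[ℂ] C(X, ℂ)} {S : Set X}

theorem exists_mem_ideal_norm_one_sub_lt (hS : IsCompact S)
    (hev : ∀ φ : R →ₐ[ℂ] ℂ, ∃ x, ∀ f, φ f = ev f x) {J : Ideal R}
    (hJ : ∀ x ∈ functionHull ev S, ∃ g ∈ J, ev g x ≠ 0) {ε : ℝ} (hε : 0 < ε) :
    ∃ g ∈ J, ∀ x ∈ S, ‖1 - ev g x‖ < ε := by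
  rcases S.eq_empty_or_nonempty with rfl | hne
  · exact ⟨0, J.zero_mem, by simp⟩
  have : CompactSpace S := isCompact_iff_compactSpace.1 hS
  have : Nonempty S := hne.to_subtype
  let ρ : R →ₐ[ℂ] C(S, ℂ) :=
    (ContinuousMap.compRightAlgHom ℂ ℂ ⟨Subtype.val, continuous_subtype_val⟩).comp ev
  have hone : 1 ∈ closure (ρ '' J) := one_mem_closure_image_ideal fun φ hφ => by
    obtain ⟨x, hx⟩ := hev φ
    simp only [hx] at hφ ⊢
    refine hJ x fun f => (hφ f).trans ?_
    exact (ContinuousMap.norm_le _ (sSup_norm_nonneg S (ev f))).2 fun y =>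
      norm_le_sSup_norm hS (ev f) y.2
  obtain ⟨_, ⟨g, hgJ, rfl⟩, hg⟩ := Metric.mem_closure_iff.1 hone ε hε
  rw [dist_eq_norm] at hg
  exact ⟨g, hgJ, fun x hx => (ContinuousMap.norm_coe_le_norm (1 - ρ g) ⟨x, hx⟩).trans_lt hg⟩

theorem exists_isOpen_functionHull_union (hS : IsCompact S)
    (hev : ∀ φ : R →ₐ[ℂ] ℂ, ∃ x, ∀ f, φ f = ev f x) {J : Ideal R}
    (hJ : ∀ x ∈ functionHull ev S, ∃ g ∈ J, ev g x ≠ 0) :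
    ∃ U, IsOpen U ∧ {z | ∀ g ∈ J, ev g z = 0} ⊆ U ∧ ∀ T ⊆ U, IsCompact T →
      Disjoint T S ∧ functionHull ev (T ∪ S) = functionHull ev T ∪ functionHull ev S := by
  obtain ⟨g, hgJ, hgS⟩ := exists_mem_ideal_norm_one_sub_lt hS hev hJ (ε := 1 / 10) (by norm_num)
  refine ⟨{x | ‖ev g x‖ < 1 / 10}, isOpen_lt (ev g).continuous.norm continuous_const,
    fun z hz => ?_, fun T hTU hT => ⟨?_, ?_⟩⟩
  · rw [mem_ofPred_eq, hz g hgJ]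
    norm_num
  · refine disjoint_left.2 fun x hxT hxS => ?_
    have hsum : 1 ≤ ‖ev g x‖ + ‖1 - ev g x‖ := by simpa using norm_add_le (ev g x) (1 - ev g x)
    have hgT : ‖ev g x‖ < 1 / 10 := hTU hxT
    linarith [hgS x hxS]
  · exact functionHull_union hT hS (fun x hx => (hTU hx).le) fun x hx => (hgS x hx).le

end Ideals

section Polynomials

variable {Y σ : Type*} [TopologicalSpace Y]

/-- Polynomials as continuous functions on a space with coordinate functions `c`. -/
def polynomialEval (c : C(Y, σ → ℂ)) : MvPolynomial σ ℂ →ₐ[ℂ] C(Y, ℂ) where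
  toFun p := ⟨fun x => eval (c x) p, (MvPolynomial.continuous_eval p).comp c.continuous⟩
  map_one' := by ext; simp
  map_mul' p q := by ext; simp
  map_zero' := by ext; simp
  map_add' p q := by ext; simp
  commutes' a := by ext; simp

theorem exists_forall_eq_polynomialEval {c : C(Y, σ → ℂ)} (hc : Function.Surjective c)
    (φ : MvPolynomial σ ℂ →ₐ[ℂ] ℂ) : ∃ x, ∀ p, φ p = polynomialEval c p x := by
  obtain ⟨x, hx⟩ := hc (φ ∘ X)
  refine ⟨x, fun p => ?_⟩
  rw [aeval_unique φ, ← hx]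
  rfl

variable {N n : ℕ}

/-- The polynomials on `ℂⁿ` as continuous functions, evaluated exactly as in `polyHull`. -/
def evalEuclidean (n : ℕ) : MvPolynomial (Fin n) ℂ →ₐ[ℂ] C(EuclideanSpace ℂ (Fin n), ℂ) :=
  polynomialEval ⟨fun z i => z i, by fun_prop⟩

/-- The polynomials on `ℂᴺ × ℂⁿ` as continuous functions, evaluated exactly as in `polyHull2`. -/
def evalProd (N n : ℕ) : MvPolynomial (Fin N ⊕ Fin n) ℂ →ₐ[ℂ]
    C(EuclideanSpace ℂ (Fin N) × EuclideanSpace ℂ (Fin n), ℂ) :=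
  polynomialEval ⟨fun z => Sum.elim (fun i => z.1 i) (fun j => z.2 j), by
    refine continuous_pi ?_
    rintro (i | j)
    · simp only [Sum.elim_inl]; fun_prop
    · simp only [Sum.elim_inr]; fun_prop⟩

theorem isPolyConvex_iff {K : Set (EuclideanSpace ℂ (Fin n))} :
    IsPolyConvex K ↔ functionHull (evalEuclidean n) K = K := Iff.rfl

theorem isPolyConvex2_iff {K : Set (EuclideanSpace ℂ (Fin N) × EuclideanSpace ℂ (Fin n))} :
    IsPolyConvex2 K ↔ functionHull (evalProd N n) K = K := Iff.rfl

theorem exists_forall_eq_evalProd (φ : MvPolynomial (Fin N ⊕ Fin n) ℂ →ₐ[ℂ] ℂ) :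
    ∃ x, ∀ p, φ p = evalProd N n p x :=
  exists_forall_eq_polynomialEval (fun v => ⟨(WithLp.toLp 2 fun i => v (.inl i),
    WithLp.toLp 2 fun j => v (.inr j)), by ext (i | j) <;> rfl⟩) φ

/-- The ideal generated by the last `n` coordinates, whose zero locus is `ℂᴺ × {0}`. -/
def sndIdeal (N n : ℕ) : Ideal (MvPolynomial (Fin N ⊕ Fin n) ℂ) :=
  Ideal.span (range fun j => X (Sum.inr j))

theorem forall_mem_sndIdeal_eq_zero_iff
    {x : EuclideanSpace ℂ (Fin N) × EuclideanSpace ℂ (Fin n)} :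
    (∀ g ∈ sndIdeal N n, evalProd N n g x = 0) ↔ x.2 = 0 := by
  let ker := RingHom.ker ((ContinuousMap.evalAlgHom ℂ ℂ x).comp (evalProd N n))
  have hker : sndIdeal N n ≤ ker ↔ ∀ j, x.2 j = 0 := by
    simp [sndIdeal, ker, Ideal.span_le, range_subset_iff, evalProd, polynomialEval,
      RingHom.mem_ker]
  exact hker.trans ⟨fun h => by ext j; exact h j, fun h j => by rw [h]; rfl⟩

theorem IsPolyConvex.prod {L : Set (EuclideanSpace ℂ (Fin N))} {B : Set (EuclideanSpace ℂ (Fin n))}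
    (hL : IsPolyConvex L) (hB : IsPolyConvex B) (hLc : IsCompact L) (hBc : IsCompact B) :
    IsPolyConvex2 (L ×ˢ B) := by
  rw [isPolyConvex_iff] at hL hB
  rw [isPolyConvex2_iff]
  refine Subset.antisymm (fun x hx => ⟨?_, ?_⟩) (subset_functionHull (hLc.prod hBc))
  · exact hL.subset <| mapsTo_functionHull (φ := Prod.fst) (ψ := rename Sum.inl)
      (fun _ _ => eval_rename _ _ _) hLc (fun _ hy => hy.1) hx
  · exact hB.subset <| mapsTo_functionHull (φ := Prod.snd) (ψ := rename Sum.inr)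
      (fun _ _ => eval_rename _ _ _) hBc (fun _ hy => hy.2) hx

theorem exists_evalEuclidean_eq_inner_sub (w c : EuclideanSpace ℂ (Fin n)) :
    ∃ p : MvPolynomial (Fin n) ℂ, ∀ z, evalEuclidean n p z = inner ℂ w (z - c) := by
  refine ⟨∑ j, C (star (w j)) * (X j - C (c j)), fun z => ?_⟩
  simp [evalEuclidean, polynomialEval, PiLp.inner_apply, mul_comm, sub_mul]

theorem isPolyConvex_closedBall (c : EuclideanSpace ℂ (Fin n)) {r : ℝ} (hr : 0 ≤ r) :
    IsPolyConvex (closedBall c r) := by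
  rw [isPolyConvex_iff]
  refine Subset.antisymm (fun z hz => ?_) (subset_functionHull (isCompact_closedBall c r))
  obtain ⟨p, hp⟩ := exists_evalEuclidean_eq_inner_sub (z - c) c
  have hpz : ‖evalEuclidean n p z‖ ≤ ‖z - c‖ * r := by
    refine norm_le_of_mem_functionHull hz (by positivity) fun y hy => ?_
    rw [hp]
    exact (norm_inner_le_norm _ _).trans (by gcongr; exact mem_closedBall_iff_norm.1 hy)
  rw [hp, inner_self_eq_norm_sq_to_K, sq, norm_mul, RCLike.norm_ofReal, abs_norm] at hpz
  rw [mem_closedBall_iff_norm]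
  by_contra! hrz
  exact hpz.not_gt (mul_lt_mul_of_pos_left hrz (hr.trans_lt hrz))

end Polynomials

theorem exists_prod_closedBall_subset {X E : Type*} [TopologicalSpace X] [PseudoMetricSpace E]
    {L : Set X} (hL : IsCompact L) {c : E} {U : Set (X × E)} (hU : IsOpen U)
    (hLU : L ×ˢ {c} ⊆ U) : ∃ r : ℝ, 0 < r ∧ L ×ˢ closedBall c r ⊆ U := by
  obtain ⟨u, v, -, hv, hLu, hcv, huv⟩ := generalized_tube_lemma hL isCompact_singleton hU hLU
  obtain ⟨r, hr, hrv⟩ := nhds_basis_closedBall.mem_iff.1 (hv.mem_nhds (hcv rfl))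
  exact ⟨r, hr, (prod_mono hLu hrv).trans huv⟩

theorem stmt_6_general (N n : ℕ) (L : Set (EuclideanSpace ℂ (Fin N)))
    (S : Set (EuclideanSpace ℂ (Fin N) × EuclideanSpace ℂ (Fin n)))
    (hLc : IsCompact L) (hLpc : IsPolyConvex L)
    (hSc : IsCompact S) (hSpc : IsPolyConvex2 S) (hS0 : ∀ q ∈ S, q.2 ≠ 0) :
    ∃ r : ℝ, 0 < r ∧ (L ×ˢ closedBall (0 : EuclideanSpace ℂ (Fin n)) r) ∩ S = ∅ ∧
      IsPolyConvex2 ((L ×ˢ closedBall (0 : EuclideanSpace ℂ (Fin n)) r) ∪ S) := by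
  rw [isPolyConvex2_iff] at hSpc
  have hJ : ∀ x ∈ functionHull (evalProd N n) S, ∃ g ∈ sndIdeal N n, evalProd N n g x ≠ 0 := by
    intro x hx
    have hx0 := mt forall_mem_sndIdeal_eq_zero_iff.1 (hS0 x (hSpc.subset hx))
    push Not at hx0
    exact hx0
  obtain ⟨U, hUopen, hU, hUunion⟩ :=
    exists_isOpen_functionHull_union hSc exists_forall_eq_evalProd hJ
  obtain ⟨r, hr, hrU⟩ := exists_prod_closedBall_subset hLc (c := 0) hUopen fun x hx =>
    hU (forall_mem_sndIdeal_eq_zero_iff.2 hx.2)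
  have hBc := isCompact_closedBall (0 : EuclideanSpace ℂ (Fin n)) r
  have hLB := isPolyConvex2_iff.1 (hLpc.prod (isPolyConvex_closedBall 0 hr.le) hLc hBc)
  obtain ⟨hdisj, hunion⟩ := hUunion _ hrU (hLc.prod hBc)
  exact ⟨r, hr, hdisj.inter_eq, isPolyConvex2_iff.2 (by rw [hunion, hLB, hSpc])⟩

/-- Let `L ⊆ ℂᴺ` be compact polynomially convex and `S ⊆ L × ℂⁿ` a compact polynomially convex
set disjoint from `ℂᴺ × {0}`. Then there exists a closed ball `B ⊆ ℂⁿ` centred at `0` of positive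
radius such that `(L × B) ∩ S = ∅` and `(L × B) ∪ S` is polynomially convex. -/
theorem stmt_6 (N n : ℕ) (L : Set (EuclideanSpace ℂ (Fin N)))
    (S : Set (EuclideanSpace ℂ (Fin N) × EuclideanSpace ℂ (Fin n)))
    (hLc : IsCompact L) (hLpc : IsPolyConvex L)
    (hSc : IsCompact S) (hSpc : IsPolyConvex2 S)
    (hSL : S ⊆ L ×ˢ univ) (hS0 : ∀ q ∈ S, q.2 ≠ 0) :
    ∃ r : ℝ, 0 < r ∧ (L ×ˢ closedBall (0 : EuclideanSpace ℂ (Fin n)) r) ∩ S = ∅ ∧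
      IsPolyConvex2 ((L ×ˢ closedBall (0 : EuclideanSpace ℂ (Fin n)) r) ∪ S) :=
  stmt_6_general N n L S hLc hLpc hSc hSpc hS0
end
end
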